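/- arXiv:2401.03050 — 3 statements merged into one kernel-verified Lean document; each statement's English description precedes it below -/
import Mathlib

section
/- Let M be a compact connected metrizable topological space with more than one point that is not homeomorphic to the circle S¹. Then there exist distinct points x, y ∈ M such that M ∖ {x, y} is connected. -/
/-- The unit circle `S¹`. -/
abbrev Circle1 : Type := Metric.sphere (0 : EuclideanSpace ℝ (Fin 2)) 1

theorem ncp_sep {M : Type*} [TopologicalSpace M] {S : Set M} (hS : IsOpen S)
    (h : ¬ IsPreconnected S) : ∃ U V : Set M, IsOpen U ∧ IsOpen V ∧ Disjoint U V ∧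
      U ∪ V = S ∧ U.Nonempty ∧ V.Nonempty := by
  rw [isPreconnected_iff_subset_of_disjoint] at h
  push Not at h
  obtain ⟨u, v, hu, hv, hs, hd, h1, h2⟩ := h
  refine ⟨S ∩ u, S ∩ v, hS.inter hu, hS.inter hv, ?_, ?_, ?_, ?_⟩
  · rw [Set.disjoint_iff_inter_eq_empty, ← hd]; ext; simp; tauto
  · rw [← Set.inter_union_distrib_left, Set.inter_eq_left]; exact hs
  · obtain ⟨x, hx, hxv⟩ := Set.not_subset.1 h2
    exact ⟨x, hx, (hs hx).resolve_right hxv⟩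
  · obtain ⟨x, hx, hxv⟩ := Set.not_subset.1 h1
    exact ⟨x, hx, (hs hx).resolve_left hxv⟩

theorem ncp_half {M : Type*} [TopologicalSpace M] {C U V : Set M} {x : M}
    (hC : IsPreconnected C) (hx : x ∈ C) (hU : IsOpen U) (hV : IsOpen V) (hd : Disjoint U V)
    (hxU : x ∉ U) (hcov : C ⊆ U ∪ V ∪ {x}) : IsPreconnected (C ∩ (U ∪ {x})) := by
  have key : ∀ O1 O2 : Set M, IsOpen O1 → IsOpen O2 → C ∩ (U ∪ {x}) ⊆ O1 ∪ O2 →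
      C ∩ (U ∪ {x}) ∩ (O1 ∩ O2) = ∅ → x ∈ O1 → C ∩ (U ∪ {x}) ⊆ O1 := by
    intro O1 O2 h1 h2 hc hdis hx1
    have := (isPreconnected_iff_subset_of_disjoint.1 hC) (O1 ∪ V) (O2 ∩ U) (h1.union hV)
      (h2.inter hU) ?_ ?_
    · rcases this with h | h
      · rintro z ⟨hz, hzU⟩
        rcases h hz with h | h
        · exact h
        · rcases hzU with h' | h'
          · exact (Set.disjoint_left.1 hd h' h).elim
          · rw [h']; exact hx1
      · exact (hxU (h hx).2).elim
    · intro z hz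
      rcases hcov hz with (h | h) | h
      · rcases hc ⟨hz, Or.inl h⟩ with h' | h'
        · exact Or.inl (Or.inl h')
        · exact Or.inr ⟨h', h⟩
      · exact Or.inl (Or.inr h)
      · rw [h]; exact Or.inl (Or.inl hx1)
    · rw [Set.eq_empty_iff_forall_notMem] at hdis ⊢
      rintro z ⟨hz, h1 | h1, h2, h3⟩
      · exact hdis z ⟨⟨hz, Or.inl h3⟩, h1, h2⟩
      · exact Set.disjoint_left.1 hd h3 h1
  rw [isPreconnected_iff_subset_of_disjoint]
  intro O1 O2 h1 h2 hc hdis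
  rcases hc ⟨hx, Or.inr rfl⟩ with h | h
  · exact Or.inl (key O1 O2 h1 h2 hc hdis h)
  · exact Or.inr (key O2 O1 h2 h1 (by rwa [Set.union_comm O2]) (by rwa [Set.inter_comm O2]) h)

theorem ncp_half' {M : Type*} [TopologicalSpace M] [PreconnectedSpace M] {U V : Set M} {x : M}
    (hU : IsOpen U) (hV : IsOpen V) (hd : Disjoint U V) (hcov : U ∪ V = {x}ᶜ) :
    IsPreconnected (U ∪ {x}) := by
  have := ncp_half (C := Set.univ) isPreconnected_univ (Set.mem_univ x) hU hV hd
    (fun h => by have : x ∈ ({x}ᶜ : Set M) := hcov ▸ Or.inl h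
                 exact this rfl) (by rw [hcov, Set.compl_union_self])
  simpa using this

/-- a preconnected set missing `q` and meeting one side lies in that side -/
theorem ncp_side {M : Type*} [TopologicalSpace M] {C U V : Set M} {q z : M}
    (hC : IsPreconnected C) (hU : IsOpen U) (hV : IsOpen V) (hd : Disjoint U V)
    (hcov : U ∪ V = {q}ᶜ) (hq : q ∉ C) (hz : z ∈ C) (hzU : z ∈ U) : C ⊆ U := by
  apply hC.subset_left_of_subset_union hU hV hd
  · rw [hcov]; intro y hy h; exact hq (h ▸ hy)
  · exact ⟨z, hz, hzU⟩

theorem ncp_noncut {M : Type*} [TopologicalSpace M] [CompactSpace M] [T1Space M]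
    [PreconnectedSpace M] {U V : Set M} {x : M} (hU : IsOpen U) (hV : IsOpen V)
    (hd : Disjoint U V) (hcov : U ∪ V = {x}ᶜ) (hne : U.Nonempty) :
    ∃ p ∈ U, IsPreconnected ({p}ᶜ : Set M) := by
  by_contra hcon
  push Not at hcon
  have hxU : x ∉ U := fun h => by
    have : x ∈ ({x}ᶜ : Set M) := hcov ▸ Or.inl h
    exact this rfl
  have ex : ∀ p : U, ∃ A B : Set M, IsOpen A ∧ IsOpen B ∧ Disjoint A B ∧
      A ∪ B = {p.1}ᶜ ∧ A.Nonempty ∧ x ∈ B := by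
    rintro ⟨p, hp⟩
    obtain ⟨A, B, hA, hB, hAB, hc, hAn, hBn⟩ := ncp_sep isOpen_compl_singleton (hcon p hp)
    have : x ∈ A ∪ B := by rw [hc]; intro h; exact hxU (h ▸ hp)
    rcases this with h | h
    · exact ⟨B, A, hB, hA, hAB.symm, by rwa [Set.union_comm], hBn, h⟩
    · exact ⟨A, B, hA, hB, hAB, hc, hAn, h⟩
  choose A B hA hB hAB hc hAn hxB using ex
  have hAm : ∀ p : U, p.1 ∉ A p := fun p h => by
    have : p.1 ∈ ({p.1}ᶜ : Set M) := hc p ▸ Or.inl h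
    exact this rfl
  have hBm : ∀ p : U, p.1 ∉ B p := fun p h => by
    have : p.1 ∈ ({p.1}ᶜ : Set M) := hc p ▸ Or.inr h
    exact this rfl
  have hAU : ∀ p : U, A p ⊆ U := by
    intro p z hz
    by_contra hzU
    have h1 : V ∪ {x} ⊆ B p := by
      refine ncp_side (q := p.1) (z := x) (ncp_half' hV hU hd.symm (by rwa [Set.union_comm])) (hB p) (hA p)
        (hAB p).symm (by rw [Set.union_comm, hc]) ?_ (Or.inr rfl) (hxB p)
      rintro (h | h)
      · exact Set.disjoint_left.1 hd p.2 h
      · exact hxU (h ▸ p.2)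
    have h2 : z ∈ V ∪ {x} := by
      by_cases h : z = x
      · exact Or.inr h
      · have : z ∈ U ∪ V := by rw [hcov]; exact h
        exact Or.inl (this.resolve_left hzU)
    exact Set.disjoint_left.1 (hAB p) hz (h1 h2)
  have hK : ∀ p : U, (B p)ᶜ = A p ∪ {p.1} := by
    intro p
    ext z
    have h1 : z ∈ A p ∪ B p ↔ z ≠ p.1 := by rw [hc]; rfl
    have h2 := hBm p
    have h3 : z ∈ A p → z ∉ B p := fun h => Set.disjoint_left.1 (hAB p) h
    simp only [Set.mem_union, Set.mem_compl_iff, Set.mem_singleton_iff] at *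
    by_cases h : z = p.1
    · subst h; tauto
    · tauto
  have mono : ∀ p q : U, q.1 ∈ A p → (B q)ᶜ ⊆ A p := by
    intro p q hq
    have h1 : B p ∪ {p.1} ⊆ B q := by
      refine ncp_side (q := q.1) (z := x) (ncp_half' (hB p) (hA p) (hAB p).symm
        (by rw [Set.union_comm, hc])) (hB q) (hA q)
        (hAB q).symm (by rw [Set.union_comm, hc]) ?_ (Or.inl (hxB p)) (hxB q)
      rintro (h | h)
      · exact Set.disjoint_left.1 (hAB p) hq h
      · exact hAm p (by rw [Set.mem_singleton_iff] at h; rwa [h] at hq)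
    intro z hz
    by_contra hzA
    apply hz
    apply h1
    by_cases h : z = p.1
    · exact Or.inr h
    · have : z ∈ A p ∪ B p := by rw [hc]; exact h
      exact Or.inl (this.resolve_left hzA)
  obtain ⟨p₀, hp₀⟩ := hne
  obtain ⟨m, hm⟩ := zorn_superset (Set.range fun p : U => (B p)ᶜ) (by
    intro c hcS hch
    rcases c.eq_empty_or_nonempty with rfl | hcn
    · exact ⟨(B ⟨p₀, hp₀⟩)ᶜ, ⟨_, rfl⟩, by simp⟩
    have hcl : ∀ s ∈ c, IsClosed s ∧ s.Nonempty ∧ s ⊆ U := by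
      intro s hs
      obtain ⟨p, rfl⟩ := hcS hs
      refine ⟨(hB p).isClosed_compl, ⟨p.1, hBm p⟩, ?_⟩
      simp only [hK]
      rintro z (hz | rfl)
      · exact hAU p hz
      · exact p.2
    have hint : (⋂₀ c).Nonempty := by
      have := hcn.to_subtype
      apply IsCompact.nonempty_sInter_of_directed_nonempty_isCompact_isClosed
      · intro s hs t ht
        rcases hch.total hs ht with h | h
        · exact ⟨s, hs, subset_rfl, h⟩
        · exact ⟨t, ht, h, subset_rfl⟩
      · exact fun s hs => (hcl s hs).2.1
      · exact fun s hs => (hcl s hs).1.isCompact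
      · exact fun s hs => (hcl s hs).1
    obtain ⟨q, hq⟩ := hint
    obtain ⟨s0, hs0⟩ := hcn
    have hqU : q ∈ U := (hcl s0 hs0).2.2 (hq s0 hs0)
    refine ⟨(B ⟨q, hqU⟩)ᶜ, ⟨_, rfl⟩, ?_⟩
    intro s hs
    obtain ⟨p, rfl⟩ := hcS hs
    have h1 := hq _ hs
    simp only [hK p] at h1
    rcases h1 with h1 | h1
    · refine (mono p ⟨q, hqU⟩ h1).trans ?_
      simp only [hK p]; exact Set.subset_union_left
    · have : p = ⟨q, hqU⟩ := Subtype.ext h1.symm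
      rw [this])
  obtain ⟨⟨p, rfl⟩, hmin⟩ := hm
  obtain ⟨q, hq⟩ := hAn p
  have h1 := mono p ⟨q, hAU p hq⟩ hq
  have h2 : (B ⟨q, hAU p hq⟩)ᶜ ⊆ (B p)ᶜ := h1.trans (by rw [hK]; exact Set.subset_union_left)
  have h3 := hmin ⟨_, rfl⟩ h2
  exact hAm p (h1 (h3 (hBm p)))

theorem ncp_nocut {M : Type*} [TopologicalSpace M] [CompactSpace M] [T1Space M]
    [PreconnectedSpace M] (H : ∀ x y : M, x ≠ y → ¬ IsPreconnected ({x, y}ᶜ : Set M)) (x : M) :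
    IsPreconnected ({x}ᶜ : Set M) := by
  by_contra hcon
  obtain ⟨U, V, hU, hV, hd, hc, hUn, hVn⟩ := ncp_sep isOpen_compl_singleton hcon
  obtain ⟨p, hp, hpc⟩ := ncp_noncut hU hV hd hc hUn
  obtain ⟨q, hq, hqc⟩ := ncp_noncut hV hU hd.symm (by rwa [Set.union_comm]) hVn
  have hxU : x ∉ U := fun h => by
    have : x ∈ ({x}ᶜ : Set M) := hc ▸ Or.inl h
    exact this rfl
  have hxV : x ∉ V := fun h => by
    have : x ∈ ({x}ᶜ : Set M) := hc ▸ Or.inr h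
    exact this rfl
  have hxp : x ≠ p := fun h => hxU (h ▸ hp)
  have hxq : x ≠ q := fun h => hxV (h ▸ hq)
  have h1 := ncp_half hpc (x := x) hxp hU hV hd hxU (by rw [hc, Set.compl_union_self]; simp)
  have h2 := ncp_half hqc (x := x) hxq hV hU hd.symm hxV (by rw [Set.union_comm V, hc, Set.compl_union_self]; simp)
  refine H p q (fun h => Set.disjoint_left.1 hd hp (h ▸ hq)) ?_
  have m1 : x ∈ ({p}ᶜ : Set M) ∩ (U ∪ {x}) := ⟨hxp, Or.inr rfl⟩
  have m2 : x ∈ ({q}ᶜ : Set M) ∩ (V ∪ {x}) := ⟨hxq, Or.inr rfl⟩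
  convert IsPreconnected.union x m1 m2 h1 h2 using 1
  ext z
  have hz : z ∈ U ∪ V ↔ z ≠ x := by rw [hc]; rfl
  have hUV : z ∈ U → z ∉ V := fun h => Set.disjoint_left.1 hd h
  have e1 : z = p → z ∈ U := fun h => h ▸ hp
  have e2 : z = q → z ∈ V := fun h => h ▸ hq
  simp only [Set.mem_union, Set.mem_inter_iff, Set.mem_compl_iff, Set.mem_insert_iff,
    Set.mem_singleton_iff] at *
  tauto

/-- `{a,b}ᶜ = U ⊔ V`; every `p ∈ U` separates `a` from `b` inside the closure of `U`. -/
theorem ncp_cross {M : Type*} [TopologicalSpace M] [T1Space M]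
    (H : ∀ x y : M, x ≠ y → ¬ IsPreconnected ({x, y}ᶜ : Set M))
    (H1 : ∀ x : M, IsPreconnected ({x}ᶜ : Set M)) {a b : M} {U V : Set M}
    (hU : IsOpen U) (hV : IsOpen V) (hd : Disjoint U V) (hc : U ∪ V = {a, b}ᶜ)
    (hVn : V.Nonempty) {p : M} (hp : p ∈ U) :
    ∃ P Q : Set M, IsOpen P ∧ IsOpen Q ∧ Disjoint P Q ∧ a ∈ P ∧ b ∈ Q ∧ p ∉ P ∧ p ∉ Q ∧
      Vᶜ ⊆ P ∪ Q ∪ {p} := by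
  obtain ⟨q, hq⟩ := hVn
  have hpq : p ≠ q := fun h => Set.disjoint_left.1 hd hp (h ▸ hq)
  obtain ⟨G1, G2, h1, h2, hG, hGc, hn1, hn2⟩ :=
    ncp_sep (Set.toFinite {p, q}).isClosed.isOpen_compl (H p q hpq)
  have mUV : ∀ z, z ∈ U ∪ V ↔ z ≠ a ∧ z ≠ b := by
    intro z; rw [hc]; simp
  have mG : ∀ z, z ∈ G1 ∪ G2 ↔ z ≠ p ∧ z ≠ q := by
    intro z; rw [hGc]; simp
  have hpa : p ≠ a ∧ p ≠ b := (mUV p).1 (Or.inl hp)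
  have hqa : q ≠ a ∧ q ≠ b := (mUV q).1 (Or.inr hq)
  -- one step: if `a, b ∈ G1`, then `G2` misses `U`
  have step : ∀ (U V G1 G2 : Set M) (p q : M), IsOpen U → IsOpen V → IsOpen G1 → IsOpen G2 →
      Disjoint U V → Disjoint G1 G2 → (∀ z, z ∈ U ∪ V ↔ z ≠ a ∧ z ≠ b) →
      (∀ z, z ∈ G1 ∪ G2 ↔ z ≠ p ∧ z ≠ q) → p ≠ a → q ∈ V → a ∈ G1 → b ∈ G1 → 
      ∀ z ∈ G2, z ∉ U := by
    intro U V G1 G2 p q hU hV h1 h2 hd hG mUV mG hpa hqV ha hb z hz hzU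
    have haU : a ∉ U := fun h => ((mUV a).1 (Or.inl h)).1 rfl
    have hs := (H1 p).subset_left_of_subset_union (u := G1 ∪ V) (v := G2 ∩ U) (h1.union hV)
      (h2.inter hU) ?_ ?_ ⟨a, hpa.symm, Or.inl ha⟩
    · have hzp : z ≠ p := ((mG z).1 (Or.inr hz)).1
      rcases hs hzp with h | h
      · exact Set.disjoint_left.1 hG h hz
      · exact Set.disjoint_left.1 hd hzU h
    · rw [Set.disjoint_left]
      rintro y (h | h) ⟨h3, h4⟩
      · exact Set.disjoint_left.1 hG h h3
      · exact Set.disjoint_left.1 hd h4 h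
    · intro y hy
      by_cases hyq : y = q
      · rw [hyq]; exact Or.inl (Or.inr hqV)
      rcases (mG y).2 ⟨hy, hyq⟩ with h | h
      · exact Or.inl (Or.inl h)
      · have : y ∈ U ∪ V := by
          rw [mUV]
          exact ⟨fun e => Set.disjoint_left.1 hG ha (e ▸ h),
            fun e => Set.disjoint_left.1 hG hb (e ▸ h)⟩
        rcases this with h' | h'
        · exact Or.inr ⟨h, h'⟩
        · exact Or.inl (Or.inr h')
  have both : ∀ G1 G2 : Set M, IsOpen G1 → IsOpen G2 → Disjoint G1 G2 →
      (∀ z, z ∈ G1 ∪ G2 ↔ z ≠ p ∧ z ≠ q) → G2.Nonempty → a ∈ G1 → b ∈ G1 → False := by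
    intro G1 G2 h1 h2 hG mG ⟨z, hz⟩ ha hb
    have hzU := step U V G1 G2 p q hU hV h1 h2 hd hG mUV mG hpa.1 hq ha hb z hz
    have hzV := step V U G1 G2 q p hV hU h1 h2 hd.symm hG (by intro z; rw [Set.union_comm, mUV])
      (by intro z; rw [mG, and_comm]) hqa.1 hp ha hb z hz
    have : z ∈ U ∪ V := by
      rw [mUV]
      exact ⟨fun e => Set.disjoint_left.1 hG ha (e ▸ hz),
        fun e => Set.disjoint_left.1 hG hb (e ▸ hz)⟩
    exact this.elim hzU hzV
  have hpG : p ∉ G1 ∪ G2 := fun h => ((mG p).1 h).1 rfl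
  have hcov : ∀ z ∈ Vᶜ, z ∈ G1 ∪ G2 ∪ {p} := by
    intro z hz
    by_cases h : z = p
    · exact Or.inr h
    · exact Or.inl ((mG z).2 ⟨h, fun e => hz (e ▸ hq)⟩)
  have mG' : ∀ z, z ∈ G2 ∪ G1 ↔ z ≠ p ∧ z ≠ q := by
    intro z; rw [Set.union_comm, mG]
  rcases (mG a).2 ⟨hpa.1.symm, hqa.1.symm⟩ with ha | ha <;>
  rcases (mG b).2 ⟨hpa.2.symm, hqa.2.symm⟩ with hb | hb
  · exact (both G1 G2 h1 h2 hG mG hn2 ha hb).elim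
  · exact ⟨G1, G2, h1, h2, hG, ha, hb, fun h => hpG (Or.inl h), fun h => hpG (Or.inr h), hcov⟩
  · exact ⟨G2, G1, h2, h1, hG.symm, ha, hb, fun h => hpG (Or.inr h), fun h => hpG (Or.inl h),
      by rw [Set.union_comm G2]; exact hcov⟩
  · exact (both G2 G1 h2 h1 hG.symm mG' hn1 ha hb).elim

/-- A compact connected separable space in which all points but `a, b` separate `a` from `b`. -/
theorem ncp_order {X : Type*} [TopologicalSpace X] [T1Space X] [PreconnectedSpace X]
    {a b : X} (hab : a ≠ b)
    (h : ∀ p, p ≠ a → p ≠ b → ∃ P Q : Set X, IsOpen P ∧ IsOpen Q ∧ Disjoint P Q ∧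
      P ∪ Q = {p}ᶜ ∧ a ∈ P ∧ b ∈ Q) :
    ∃ _ : LinearOrder X, (∀ p : X, IsOpen (Set.Iio p)) ∧ (∀ p : X, IsOpen (Set.Ioi p)) ∧
      (∀ p : X, a ≤ p) ∧ (∀ p : X, p ≤ b) := by
  have h' : ∀ p, ∃ P Q : Set X, IsOpen P ∧ IsOpen Q ∧ Disjoint P Q ∧
      P ∪ Q = {p}ᶜ ∧ a ∈ P ∪ {p} ∧ b ∈ Q ∪ {p} := by
    intro p
    by_cases hpa : p = a
    · subst hpa
      exact ⟨∅, {p}ᶜ, isOpen_empty, isOpen_compl_singleton, by simp, by simp, by simp,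
        Or.inl hab.symm⟩
    by_cases hpb : p = b
    · subst hpb
      exact ⟨{p}ᶜ, ∅, isOpen_compl_singleton, isOpen_empty, by simp, by simp, Or.inl hab, by simp⟩
    obtain ⟨P, Q, h1, h2, h3, h4, h5, h6⟩ := h p hpa hpb
    exact ⟨P, Q, h1, h2, h3, h4, Or.inl h5, Or.inl h6⟩
  choose L R hL hR hd hc ha hb using h'
  have hc' : ∀ p, R p ∪ L p = {p}ᶜ := fun p => by rw [Set.union_comm, hc]
  have cL : ∀ p, IsPreconnected (L p ∪ {p}) := fun p => ncp_half' (hL p) (hR p) (hd p) (hc p)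
  have cR : ∀ p, IsPreconnected (R p ∪ {p}) := fun p =>
    ncp_half' (hR p) (hL p) (hd p).symm (hc' p)
  have mem : ∀ p q, q ∈ L p ∪ R p ↔ q ≠ p := fun p q => by rw [hc]; rfl
  have nL : ∀ p, p ∉ L p := fun p h => (mem p p).1 (Or.inl h) rfl
  have nR : ∀ p, p ∉ R p := fun p h => (mem p p).1 (Or.inr h) rfl
  have LL : ∀ p q, q ∈ R p → L p ∪ {p} ⊆ L q := by
    intro p q hq
    have hn : q ∉ L p ∪ {p} := by
      rintro (h | h)
      · exact Set.disjoint_left.1 (hd p) h hq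
      · rw [Set.mem_singleton_iff] at h; subst h; exact nR _ hq
    refine ncp_side (cL p) (hL q) (hR q) (hd q) (hc q) hn (ha p) ?_
    rcases ha q with h | h
    · exact h
    · rw [Set.mem_singleton_iff] at h; exact (hn (h ▸ ha p)).elim
  have RR : ∀ p q, q ∈ L p → R p ∪ {p} ⊆ R q := by
    intro p q hq
    have hn : q ∉ R p ∪ {p} := by
      rintro (h | h)
      · exact Set.disjoint_left.1 (hd p) hq h
      · rw [Set.mem_singleton_iff] at h; subst h; exact nL _ hq
    refine ncp_side (cR p) (hR q) (hL q) (hd q).symm (hc' q) hn (hb p) ?_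
    rcases hb q with h | h
    · exact h
    · rw [Set.mem_singleton_iff] at h; exact (hn (h ▸ hb p)).elim
  have sw1 : ∀ p q, q ∈ R p → p ∈ L q := fun p q hq => LL p q hq (Or.inr rfl)
  have sw2 : ∀ p q, q ∈ L p → p ∈ R q := fun p q hq => RR p q hq (Or.inr rfl)
  have tr : ∀ p q r, p ∈ L q → q ∈ L r → p ∈ L r := fun p q r h1 h2 =>
    LL q r (sw2 _ _ h2) (Or.inl h1)
  have asym : ∀ p q, p ∈ L q → q ∉ L p := fun p q h1 h2 => nL p (tr _ _ _ h1 h2)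
  let ord : LinearOrder X :=
    { le := fun p q => p = q ∨ p ∈ L q
      lt := fun p q => p ∈ L q
      le_refl := fun p => Or.inl rfl
      le_trans := by
        rintro p q r (rfl | h1) (rfl | h2)
        · exact Or.inl rfl
        · exact Or.inr h2
        · exact Or.inr h1
        · exact Or.inr (tr _ _ _ h1 h2)
      lt_iff_le_not_ge := by
        intro p q
        constructor
        · intro h
          refine ⟨Or.inr h, ?_⟩
          rintro (rfl | h')
          · exact nL _ h
          · exact asym _ _ h h'
        · rintro ⟨rfl | h1, h2⟩
          · exact (h2 (Or.inl rfl)).elim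
          · exact h1
      le_antisymm := by
        rintro p q (rfl | h1) (h2 | h2)
        · rfl
        · rfl
        · exact h2.symm
        · exact (asym _ _ h1 h2).elim
      le_total := by
        intro p q
        by_cases h : p = q
        · exact Or.inl (Or.inl h)
        · rcases (mem q p).2 h with h' | h'
          · exact Or.inl (Or.inr h')
          · exact Or.inr (Or.inr (sw1 _ _ h'))
      toDecidableLE := Classical.decRel _ }
  refine ⟨ord, fun p => hL p, fun p => ?_, fun p => ?_, fun p => ?_⟩
  · have : Set.Ioi p = R p := by
      ext q; exact ⟨fun h => sw2 _ _ h, fun h => sw1 _ _ h⟩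
    rw [this]; exact hR p
  · rcases ha p with h | h
    · exact Or.inr h
    · exact Or.inl h
  · rcases hb p with h | h
    · exact Or.inr (sw1 _ _ h)
    · exact Or.inl h.symm

theorem ncp_arc {X : Type*} [TopologicalSpace X] [T1Space X] [PreconnectedSpace X]
    [TopologicalSpace.SeparableSpace X] {a b : X} (hab : a ≠ b)
    (h : ∀ p, p ≠ a → p ≠ b → ∃ P Q : Set X, IsOpen P ∧ IsOpen Q ∧ Disjoint P Q ∧
      P ∪ Q = {p}ᶜ ∧ a ∈ P ∧ b ∈ Q) :
    ∃ f : X → ℝ, Continuous f ∧ Function.Injective f ∧ f a = -1 ∧ f b = 1 ∧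
      Set.range f = Set.Icc (-1) 1 := by
  obtain ⟨_, oI, oJ, hbot, htop⟩ := ncp_order hab h
  obtain ⟨D, hDc, hDd⟩ := TopologicalSpace.exists_countable_dense X
  have btw : ∀ p q : X, p < q → ∃ d ∈ D, p < d ∧ d < q := by
    intro p q hpq
    have hne : (Set.Ioi p ∩ Set.Iio q).Nonempty := by
      apply nonempty_inter (oJ p) (oI q)
      · ext z
        simp only [Set.mem_union, Set.mem_Ioi, Set.mem_Iio, Set.mem_univ, iff_true]
        rcases lt_or_ge z q with h | h
        · exact Or.inr h
        · exact Or.inl (hpq.trans_le h)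
      · exact ⟨q, hpq⟩
      · exact ⟨p, hpq⟩
    obtain ⟨d, hd, hdD⟩ := hDd.inter_open_nonempty _ ((oJ p).inter (oI q)) hne
    exact ⟨d, hdD, hd⟩
  let E : Set X := {d | d ∈ D ∧ a < d ∧ d < b}
  have hltE : ∀ p q : X, p < q → ∃ d : E, p < d ∧ d < q := by
    intro p q hpq
    obtain ⟨d, hd, h1, h2⟩ := btw p q hpq
    exact ⟨⟨d, hd, (hbot p).trans_lt h1, h2.trans_le (htop q)⟩, h1, h2⟩
  have hablt : a < b := lt_of_le_of_ne (hbot b) hab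
  have : Countable E := (hDc.mono (fun d hd => hd.1)).to_subtype
  have : DenselyOrdered E := ⟨fun p q hpq => by
    obtain ⟨d, h1, h2⟩ := hltE p q hpq
    exact ⟨d, h1, h2⟩⟩
  have : NoMinOrder E := ⟨fun p => by
    obtain ⟨d, h1, h2⟩ := hltE a p p.2.2.1
    exact ⟨d, h2⟩⟩
  have : NoMaxOrder E := ⟨fun p => by
    obtain ⟨d, h1, h2⟩ := hltE p b p.2.2.2
    exact ⟨d, h1⟩⟩
  have : Nonempty E := by
    obtain ⟨d, h1, h2⟩ := hltE a b hablt
    exact ⟨d⟩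
  have : Nonempty (Set.Ioo (-1 : ℚ) 1) := ⟨⟨0, by norm_num, by norm_num⟩⟩
  obtain ⟨φ⟩ := Order.iso_of_countable_dense E (Set.Ioo (-1 : ℚ) 1)
  let g : E → ℝ := fun d => ((φ d : ℚ) : ℝ)
  have gmono : ∀ d e : E, d < e ↔ g d < g e := by
    intro d e
    simp [g, Rat.cast_lt]
  have g1 : ∀ d, -1 < g d := fun d => by
    have := (φ d).2.1
    simp only [g]; exact_mod_cast this
  have g2 : ∀ d, g d < 1 := fun d => by
    have := (φ d).2.2
    simp only [g]; exact_mod_cast this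
  have gd : ∀ s t : ℝ, s < t → -1 ≤ s → t ≤ 1 → ∃ d : E, s < g d ∧ g d < t := by
    intro s t hst hs ht
    obtain ⟨r, h1, h2⟩ := exists_rat_btwn hst
    have hr1 : (-1 : ℚ) < r := by
      have : (-1 : ℝ) < r := by linarith
      exact_mod_cast this
    have hr2 : r < (1 : ℚ) := by
      have : (r : ℝ) < 1 := by linarith
      exact_mod_cast this
    refine ⟨φ.symm ⟨r, hr1, hr2⟩, ?_⟩
    simp only [g, OrderIso.apply_symm_apply]
    exact ⟨h1, h2⟩
  let S : X → Set ℝ := fun p => {-1} ∪ {y | ∃ d : E, (d : X) < p ∧ y = g d}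
  have hS : ∀ p, IsLUB (S p) (sSup (S p)) := by
    intro p
    refine isLUB_csSup ⟨-1, Or.inl rfl⟩ ⟨1, ?_⟩
    rintro y (h | ⟨d, -, rfl⟩)
    · rw [Set.mem_singleton_iff.1 h]; norm_num
    · exact (g2 d).le
  obtain ⟨f, hf⟩ : ∃ f : X → ℝ, ∀ p, IsLUB (S p) (f p) := ⟨_, hS⟩
  have f_ge : ∀ p, -1 ≤ f p := fun p => (hf p).1 (Or.inl rfl)
  have f_gt : ∀ p (d : E), (d : X) < p → g d ≤ f p := fun p d hd => (hf p).1 (Or.inr ⟨d, hd, rfl⟩)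
  have f_le : ∀ p (d : E), p ≤ (d : X) → f p ≤ g d := by
    intro p d hd
    apply (hf p).2
    rintro y (h | ⟨e, he, rfl⟩)
    · rw [Set.mem_singleton_iff.1 h]; exact (g1 d).le
    · exact ((gmono e d).1 (he.trans_le hd)).le
  have f_le1 : ∀ p, f p ≤ 1 := by
    intro p
    apply (hf p).2
    rintro y (h | ⟨e, he, rfl⟩)
    · rw [Set.mem_singleton_iff.1 h]; norm_num
    · exact (g2 e).le
  have smono : StrictMono f := by
    intro p q hpq
    obtain ⟨e, h1, h2⟩ := hltE p q hpq
    obtain ⟨d, h3, h4⟩ := hltE p e h1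
    calc f p ≤ g d := f_le p d h3.le
      _ < g e := (gmono d e).1 h4
      _ ≤ f q := f_gt q e h2
  have fa : f a = -1 := by
    apply le_antisymm _ (f_ge a)
    apply (hf a).2
    rintro y (h | ⟨e, he, rfl⟩)
    · exact (Set.mem_singleton_iff.1 h).le
    · exact (lt_irrefl _ (he.trans_le (hbot _))).elim
  have fb : f b = 1 := by
    apply le_antisymm (f_le1 b)
    by_contra hlt
    push Not at hlt
    obtain ⟨d, h1, h2⟩ := gd _ _ hlt (f_ge b) le_rfl
    exact absurd (f_gt b d d.2.2.2) (not_le.2 h1)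
  have fc : Continuous f := by
    rw [OrderTopology.continuous_iff]
    intro c
    constructor
    · rw [isOpen_iff_forall_mem_open]
      intro p hp
      have hp' : c < f p := hp
      by_cases hc : c < -1
      · exact ⟨Set.univ, fun z _ => hc.trans_le (f_ge z), isOpen_univ, trivial⟩
      push Not at hc
      obtain ⟨d, h1, h2⟩ := gd c (f p) hp' hc (f_le1 p)
      refine ⟨Set.Ioi d, fun z hz => h1.trans_le (f_gt z d hz), oJ d, ?_⟩
      by_contra hn
      exact absurd (f_le p d (not_lt.1 hn)) (not_le.2 h2)
    · rw [isOpen_iff_forall_mem_open]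
      intro p hp
      have hp' : f p < c := hp
      by_cases hc : 1 < c
      · exact ⟨Set.univ, fun z _ => (f_le1 z).trans_lt hc, isOpen_univ, trivial⟩
      push Not at hc
      obtain ⟨e, h1, h2⟩ := gd (f p) c hp' (f_ge p) hc
      obtain ⟨d, h3, h4⟩ := gd (f p) (g e) h1 (f_ge p) (g2 e).le
      refine ⟨Set.Iio e, fun z hz => (f_le z e (le_of_lt hz)).trans_lt h2, oI e, ?_⟩
      have h5 : p ≤ d := by
        by_contra hn
        exact absurd (f_gt p d (not_le.1 hn)) (not_le.2 h3)
      exact h5.trans_lt ((gmono d e).2 h4)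
  refine ⟨f, fc, smono.injective, fa, fb, ?_⟩
  apply Set.Subset.antisymm
  · rintro _ ⟨p, rfl⟩; exact ⟨f_ge p, f_le1 p⟩
  · have := (isPreconnected_range fc).Icc_subset ⟨a, fa⟩ ⟨b, fb⟩
    exact this

theorem ncp_side_arc {M : Type*} [TopologicalSpace M] [TopologicalSpace.MetrizableSpace M]
    [CompactSpace M]
    (H : ∀ x y : M, x ≠ y → ¬ IsPreconnected ({x, y}ᶜ : Set M))
    (H1 : ∀ x : M, IsPreconnected ({x}ᶜ : Set M)) {a b : M} (hab : a ≠ b) {U V : Set M}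
    (hU : IsOpen U) (hV : IsOpen V) (hd : Disjoint U V) (hc : U ∪ V = {a, b}ᶜ)
    (hUn : U.Nonempty) (hVn : V.Nonempty) :
    ∃ f : M → ℝ, ContinuousOn f Vᶜ ∧ Set.InjOn f Vᶜ ∧ f a = -1 ∧ f b = 1 ∧
      f '' Vᶜ = Set.Icc (-1) 1 := by
  have mUV : ∀ z, z ∈ U ∪ V ↔ z ≠ a ∧ z ≠ b := by
    intro z; rw [hc]; simp
  have haU : a ∉ U := fun h => ((mUV a).1 (Or.inl h)).1 rfl
  have haV : a ∉ V := fun h => ((mUV a).1 (Or.inr h)).1 rfl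
  have hbU : b ∉ U := fun h => ((mUV b).1 (Or.inl h)).2 rfl
  have hbV : b ∉ V := fun h => ((mUV b).1 (Or.inr h)).2 rfl
  have conn : IsPreconnected (Vᶜ : Set M) := by
    have h1 := ncp_half (H1 a) (x := b) hab.symm hU hV hd hbU
      (by rw [hc]; intro z hz; by_cases h : z = b
          · exact Or.inr h
          · left; simp; exact ⟨hz, h⟩)
    have h2 := ncp_half (H1 b) (x := a) hab hU hV hd haU
      (by rw [hc]; intro z hz; by_cases h : z = a
          · exact Or.inr h
          · left; simp; exact ⟨h, hz⟩)
    obtain ⟨u, hu⟩ := hUn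
    have hu' := (mUV u).1 (Or.inl hu)
    have m1 : u ∈ ({a}ᶜ : Set M) ∩ (U ∪ {b}) := ⟨hu'.1, Or.inl hu⟩
    have m2 : u ∈ ({b}ᶜ : Set M) ∩ (U ∪ {a}) := ⟨hu'.2, Or.inl hu⟩
    convert IsPreconnected.union u m1 m2 h1 h2 using 1
    ext z
    have hz := mUV z
    have hUV : z ∈ U → z ∉ V := fun h => Set.disjoint_left.1 hd h
    by_cases e1 : z = a
    · subst e1; simp [haV, hab]
    by_cases e2 : z = b
    · subst e2; simp [hbV, hab.symm]
    simp only [Set.mem_union, Set.mem_inter_iff, Set.mem_compl_iff, 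
      Set.mem_singleton_iff] at *
    tauto
  have : PreconnectedSpace (Vᶜ : Set M) := Subtype.preconnectedSpace conn
  have : CompactSpace (Vᶜ : Set M) := isCompact_iff_compactSpace.1 hV.isClosed_compl.isCompact
  let _ := TopologicalSpace.metrizableSpaceMetric M
  obtain ⟨f, f1, f2, f3, f4, f5⟩ := ncp_arc (X := (Vᶜ : Set M)) (a := ⟨a, haV⟩) (b := ⟨b, hbV⟩)
    (fun h => hab (congrArg Subtype.val h)) (by
    rintro ⟨p, hp⟩ hpa hpb
    have hpU : p ∈ U := by
      have : p ∈ U ∪ V := by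
        rw [mUV]; exact ⟨fun h => hpa (Subtype.ext h), fun h => hpb (Subtype.ext h)⟩
      exact this.resolve_right hp
    obtain ⟨P, Q, hP, hQ, hPQ, ha, hb, hpP, hpQ, hcov⟩ := ncp_cross H H1 hU hV hd hc hVn hpU
    refine ⟨Subtype.val ⁻¹' P, Subtype.val ⁻¹' Q, hP.preimage continuous_subtype_val,
      hQ.preimage continuous_subtype_val, hPQ.preimage _, ?_, ha, hb⟩
    ext ⟨z, hz⟩
    have h1 := hcov hz
    have h2 : z = p → z ∉ P ∧ z ∉ Q := by rintro rfl; exact ⟨hpP, hpQ⟩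
    simp only [Set.mem_union, Set.mem_preimage, Set.mem_compl_iff, 
      Set.mem_singleton_iff, Subtype.mk.injEq] at *
    tauto)
  classical
  have key : ∀ z : (Vᶜ : Set M), (fun z : M => if h : z ∈ (Vᶜ : Set M) then f ⟨z, h⟩ else 0) z.1 = f z := by
    rintro ⟨z, hz⟩; exact dif_pos hz
  refine ⟨fun z => if h : z ∈ (Vᶜ : Set M) then f ⟨z, h⟩ else 0, ?_, ?_, ?_, ?_, ?_⟩
  · rw [continuousOn_iff_continuous_domRestrict]
    convert f1 using 1
    ext z; exact key z
  · intro z hz w hw hzw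
    have h1 := key ⟨z, hz⟩
    have h2 := key ⟨w, hw⟩
    exact congrArg Subtype.val (f2 (h1.symm.trans (hzw.trans h2)))
  · exact (key ⟨a, haV⟩).trans f3
  · exact (key ⟨b, hbV⟩).trans f4
  · rw [← f5]
    ext y
    constructor
    · rintro ⟨z, hz, rfl⟩; exact ⟨⟨z, hz⟩, (key ⟨z, hz⟩).symm⟩
    · rintro ⟨z, rfl⟩; exact ⟨z.1, z.2, key z⟩

/-- **Proposition (non-cut pairs exist).**
If `M` is a compact connected metrizable space with more than one point which is not
homeomorphic to the circle, then there are distinct points `x, y ∈ M` such that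
`M ∖ {x, y}` is connected. -/
theorem exists_non_cut_pair (M : Type) [TopologicalSpace M] [CompactSpace M]
    [TopologicalSpace.MetrizableSpace M] [ConnectedSpace M] [Nontrivial M]
    (hnotcircle : IsEmpty (M ≃ₜ Circle1)) :
    ∃ x y : M, x ≠ y ∧ IsConnected ({x, y}ᶜ : Set M) := by
  by_contra hcon
  push Not at hcon
  have hinf : Set.Infinite (Set.univ : Set M) :=
    isPreconnected_univ.infinite_of_nontrivial Set.nontrivial_univ
  have H : ∀ x y : M, x ≠ y → ¬ IsPreconnected ({x, y}ᶜ : Set M) := by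
    intro x y hxy hp
    refine hcon x y hxy ⟨?_, hp⟩
    by_contra hne
    rw [Set.not_nonempty_iff_eq_empty, Set.compl_empty_iff] at hne
    exact hinf (hne ▸ Set.toFinite {x, y})
  have H1 := ncp_nocut H
  obtain ⟨a, b, hab⟩ := exists_pair_ne M
  obtain ⟨U, V, hU, hV, hd, hc, hUn, hVn⟩ :=
    ncp_sep (Set.toFinite {a, b}).isClosed.isOpen_compl (H a b hab)
  obtain ⟨f, f1, f2, f3, f4, f5⟩ := ncp_side_arc H H1 hab hU hV hd hc hUn hVn
  obtain ⟨g, g1, g2, g3, g4, g5⟩ := ncp_side_arc H H1 hab hV hU hd.symm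
    (by rwa [Set.union_comm]) hVn hUn
  have mUV : ∀ z, z ∈ U ∪ V ↔ z ≠ a ∧ z ≠ b := by
    intro z; rw [hc]; simp
  have hcap : ∀ z, z ∉ U → z ∉ V → z = a ∨ z = b := by
    intro z h1 h2
    by_contra hn
    push Not at hn
    exact ((mUV z).2 hn).elim h1 h2
  have agree : ∀ z, z ∉ U → z ∉ V → f z = g z ∧ 1 - f z ^ 2 = 0 := by
    intro z h1 h2
    rcases hcap z h1 h2 with rfl | rfl
    · rw [f3, g3]; norm_num
    · rw [f4, g4]; norm_num
  have hUV : ∀ z, z ∈ U → z ∉ V := fun z h => Set.disjoint_left.1 hd h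
  have haU : a ∉ U := fun h => ((mUV a).1 (Or.inl h)).1 rfl
  have haV : a ∉ V := fun h => ((mUV a).1 (Or.inr h)).1 rfl
  have hbU : b ∉ U := fun h => ((mUV b).1 (Or.inl h)).2 rfl
  have hbV : b ∉ V := fun h => ((mUV b).1 (Or.inr h)).2 rfl
  have fI : ∀ z, z ∉ V → f z ∈ Set.Icc (-1 : ℝ) 1 := fun z hz => f5 ▸ ⟨z, hz, rfl⟩
  have gI : ∀ z, z ∉ U → g z ∈ Set.Icc (-1 : ℝ) 1 := fun z hz => g5 ▸ ⟨z, hz, rfl⟩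
  classical
  -- coordinates
  obtain ⟨u, hu⟩ : ∃ u : M → ℝ, ∀ z, u z = if z ∈ V then g z else f z := ⟨_, fun z => rfl⟩
  obtain ⟨v, hv⟩ : ∃ v : M → ℝ, ∀ z, v z = if z ∈ V then - √(1 - g z ^ 2) else √(1 - f z ^ 2) :=
    ⟨_, fun z => rfl⟩
  have uf : ∀ z ∈ Vᶜ, u z = f z := fun z hz => by rw [hu, if_neg hz]
  have vf : ∀ z ∈ Vᶜ, v z = √(1 - f z ^ 2) := fun z hz => by rw [hv, if_neg hz]
  have ug : ∀ z ∈ Uᶜ, u z = g z := fun z hz => by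
    rw [hu]; split_ifs with h
    · rfl
    · exact (agree z hz h).1
  have vg : ∀ z ∈ Uᶜ, v z = -√(1 - g z ^ 2) := fun z hz => by
    rw [hv]; split_ifs with h
    · rfl
    · have := agree z hz h
      rw [← this.1, this.2]; simp
  have cov : (Vᶜ : Set M) ∪ Uᶜ = Set.univ := by
    ext z; have := hUV z; simp; tauto
  have uc : Continuous u := by
    rw [← continuousOn_univ, ← cov]
    exact (f1.congr uf).union_of_isClosed (g1.congr ug) hV.isClosed_compl hU.isClosed_compl
  have vc : Continuous v := by
    rw [← continuousOn_univ, ← cov]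
    refine ContinuousOn.union_of_isClosed (ContinuousOn.congr ?_ vf) (ContinuousOn.congr ?_ vg)
      hV.isClosed_compl hU.isClosed_compl
    · exact (continuousOn_const.sub (f1.pow 2)).sqrt
    · exact (continuousOn_const.sub (g1.pow 2)).sqrt.neg
  have uv : ∀ z, u z ^ 2 + v z ^ 2 = 1 := by
    intro z
    by_cases hz : z ∈ V
    · have hz' : z ∈ Uᶜ := fun h => hUV z h hz
      obtain ⟨h1, h2⟩ := gI z hz'
      rw [ug z hz', vg z hz', neg_sq, Real.sq_sqrt (by nlinarith)]; ring
    · obtain ⟨h1, h2⟩ := fI z hz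
      rw [uf z hz, vf z hz, Real.sq_sqrt (by nlinarith)]; ring
  let F : M → Circle1 := fun z => ⟨!₂[u z, v z], by
    rw [mem_sphere_zero_iff_norm, EuclideanSpace.norm_eq]
    simp [Fin.sum_univ_two, uv]⟩
  have Fc : Continuous F := by
    apply Continuous.subtype_mk
    fun_prop
  have mixed : ∀ z w, z ∉ V → w ∉ U → u z = u w → v z = v w → z = w := by
    intro z w hz hw h1 h2
    rw [uf z hz, ug w hw] at h1
    rw [vf z hz, vg w hw, h1] at h2
    have h3 := Real.sqrt_nonneg (1 - g w ^ 2)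
    have h4 : √(1 - g w ^ 2) = 0 := by linarith
    obtain ⟨h5, h6⟩ := gI w hw
    rw [Real.sqrt_eq_zero (by nlinarith)] at h4
    have h7 : g w = 1 ∨ g w = -1 := by
      rcases mul_eq_zero.1 (show (g w - 1) * (g w + 1) = 0 by linarith) with h | h
      · left; linarith
      · right; linarith
    rcases h7 with h7 | h7
    · rw [g2 hw hbU (h7.trans g4.symm), f2 hz hbV ((h1.trans h7).trans f4.symm)]
    · rw [g2 hw haU (h7.trans g3.symm), f2 hz haV ((h1.trans h7).trans f3.symm)]
  have Fi : Function.Injective F := by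
    intro z w hzw
    have e := congrArg Subtype.val hzw
    have h1 : u z = u w := by simpa [F] using congrArg (fun x : EuclideanSpace ℝ (Fin 2) => x 0) e
    have h2 : v z = v w := by simpa [F] using congrArg (fun x : EuclideanSpace ℝ (Fin 2) => x 1) e
    by_cases hz : z ∈ V <;> by_cases hw : w ∈ V
    · have hz' : z ∈ Uᶜ := fun h => hUV z h hz
      have hw' : w ∈ Uᶜ := fun h => hUV w h hw
      rw [ug z hz', ug w hw'] at h1
      exact g2 hz' hw' h1
    · exact (mixed w z hw (fun h => hUV z h hz) h1.symm h2.symm).symm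
    · exact mixed z w hz (fun h => hUV w h hw) h1 h2
    · rw [uf z hz, uf w hw] at h1
      exact f2 hz hw h1
  have Fs : Function.Surjective F := by
    rintro ⟨x, hx⟩
    rw [mem_sphere_zero_iff_norm, EuclideanSpace.norm_eq, Real.sqrt_eq_one] at hx
    simp only [Fin.sum_univ_two, Real.norm_eq_abs, sq_abs] at hx
    have hx0 : x 0 ∈ Set.Icc (-1 : ℝ) 1 := by
      constructor <;> nlinarith [sq_nonneg (x 1)]
    suffices h : ∃ z, u z = x 0 ∧ v z = x 1 by
      obtain ⟨z, h1, h2⟩ := h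
      refine ⟨z, Subtype.ext ?_⟩
      ext i
      fin_cases i
      · simpa [F] using h1
      · simpa [F] using h2
    have hx1 : 1 - x 0 ^ 2 = x 1 ^ 2 := by linarith
    rcases le_total 0 (x 1) with h | h
    · rw [← f5] at hx0
      obtain ⟨z, hz, hzx⟩ := hx0
      refine ⟨z, (uf z hz).trans hzx, ?_⟩
      rw [vf z hz, hzx, hx1, Real.sqrt_sq h]
    · rw [← g5] at hx0
      obtain ⟨z, hz, hzx⟩ := hx0
      refine ⟨z, (ug z hz).trans hzx, ?_⟩
      rw [vg z hz, hzx, hx1, Real.sqrt_sq_eq_abs, abs_of_nonpos h, neg_neg]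
  exact hnotcircle.false (Continuous.homeoOfEquivCompactToT2 (f := Equiv.ofBijective F ⟨Fi, Fs⟩) Fc)
end

section
/- Let (Γ, M) be a boundary pair with M connected and not homeomorphic to the circle S¹, and let ρ : Γ → PGL_d(ℝ) be a relatively 1-Anosov representation with respect to (Γ, M), with limit maps ξ¹ : M → ℙ(ℝ^d) and ξ^{d−1} : M → ℙ((ℝ^d)*). Then ξ¹(M) is bounded in an affine chart of ℙ(ℝ^d): there exists a nonzero linear functional φ : ℝ^d → ℝ such that φ(v) ≠ 0 for every x ∈ M and every nonzero vector v spanning ξ¹(x). -/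
open Filter Topology Matrix

noncomputable instance projectivizationTopology
    {K V : Type*} [DivisionRing K] [AddCommGroup V] [Module K V] [TopologicalSpace V] :
    TopologicalSpace (Projectivization K V) :=
  inferInstanceAs (TopologicalSpace (Quotient _))

/-- `g n • z → a` locally uniformly on `M ∖ {b}`. -/
def ConvLocUnif {Γ M : Type} [SMul Γ M] [TopologicalSpace M]
    (g : ℕ → Γ) (a b : M) : Prop :=
  ∀ K : Set M, IsCompact K → b ∉ K →
    ∀ U ∈ 𝓝 a, ∀ᶠ n in atTop, ∀ z ∈ K, g n • z ∈ U

/-- The action of `Γ` on `M` is an action by homeomorphisms with the convergence property. -/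
def IsConvergenceAction (Γ M : Type) [Group Γ] [TopologicalSpace M] [MulAction Γ M] : Prop :=
  (∀ γ : Γ, Continuous fun x : M => γ • x) ∧
  ∀ g : ℕ → Γ, Function.Injective g →
    ∃ φ : ℕ → ℕ, StrictMono φ ∧ ∃ a b : M, ConvLocUnif (fun n => g (φ n)) a b

def IsConicalLimitPoint (Γ : Type) {M : Type} [Group Γ] [TopologicalSpace M]
    [MulAction Γ M] (x : M) : Prop :=
  ∃ a b : M, a ≠ b ∧ ∃ g : ℕ → Γ,
    Tendsto (fun n => g n • x) atTop (𝓝 a) ∧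
    ∀ y : M, y ≠ x → Tendsto (fun n => g n • y) atTop (𝓝 b)

def IsBoundedParabolicPoint (Γ : Type) {M : Type} [Group Γ] [TopologicalSpace M]
    [MulAction Γ M] (x : M) : Prop :=
  Infinite (MulAction.stabilizer Γ x) ∧
  (∀ y : M, (∀ γ ∈ MulAction.stabilizer Γ x, γ • y = y) → y = x) ∧
  (∃ K : Set M, IsCompact K ∧ x ∉ K ∧
    ∀ y : M, y ≠ x → ∃ γ ∈ MulAction.stabilizer Γ x, γ • y ∈ K)

/-- `(Γ, M)` is a boundary pair: `Γ` is a finitely generated group acting as a geometrically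
finite convergence group on the perfect compact metrizable space `M`. -/
structure IsBoundaryPair (Γ M : Type) [Group Γ] [TopologicalSpace M] [MulAction Γ M] : Prop where
  fg : Group.FG Γ
  compact : CompactSpace M
  metrizable : TopologicalSpace.MetrizableSpace M
  perfect : ∀ x : M, Filter.NeBot (𝓝[≠] x)
  conv : IsConvergenceAction Γ M
  gf : ∀ x : M, IsConicalLimitPoint Γ x ∨
    (IsBoundedParabolicPoint Γ x ∧ Group.FG (MulAction.stabilizer Γ x))

/-- The projective general linear group `PGL_d(ℝ)`. -/
abbrev ProjGL (d : ℕ) : Type := GL (Fin d) ℝ ⧸ Subgroup.center (GL (Fin d) ℝ)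

/-- A relatively 1-Anosov representation into `PGL_d(ℝ)`, recorded through its limit maps
`ξ : M → ℙ(ℝ^d)` and `ξs : M → ℙ((ℝ^d)*)` (a functional being recorded by the vector pairing
with it under the dot product); equivariance and dynamics are phrased via arbitrary lifts of
`ρ(γ)` to `GL_d(ℝ)`. -/
structure IsRelOneAnosovPGL {Γ M : Type} [Group Γ] [TopologicalSpace M] [MulAction Γ M]
    {d : ℕ} (ρ : Γ →* ProjGL d)
    (ξ : M → Projectivization ℝ (Fin d → ℝ))
    (ξs : M → Projectivization ℝ (Fin d → ℝ)) : Prop where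
  continuous_fst : Continuous ξ
  continuous_snd : Continuous ξs
  equivariant_fst : ∀ (γ : Γ) (g : GL (Fin d) ℝ), (g : ProjGL d) = ρ γ →
      ∀ (x : M) (v : Fin d → ℝ) (hv : v ≠ 0)
      (hgv : (g : Matrix (Fin d) (Fin d) ℝ) *ᵥ v ≠ 0),
      ξ x = Projectivization.mk ℝ v hv →
      ξ (γ • x) = Projectivization.mk ℝ ((g : Matrix (Fin d) (Fin d) ℝ) *ᵥ v) hgv
  equivariant_snd : ∀ (γ : Γ) (g : GL (Fin d) ℝ), (g : ProjGL d) = ρ γ →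
      ∀ (x : M) (φ : Fin d → ℝ) (hφ : φ ≠ 0)
      (hgφ : φ ᵥ* ((g⁻¹ : GL (Fin d) ℝ) : Matrix (Fin d) (Fin d) ℝ) ≠ 0),
      ξs x = Projectivization.mk ℝ φ hφ →
      ξs (γ • x) = Projectivization.mk ℝ
        (φ ᵥ* ((g⁻¹ : GL (Fin d) ℝ) : Matrix (Fin d) (Fin d) ℝ)) hgφ
  transverse : ∀ (x y : M), x ≠ y → ∀ (v φ : Fin d → ℝ) (hv : v ≠ 0) (hφ : φ ≠ 0),
      ξ x = Projectivization.mk ℝ v hv → ξs y = Projectivization.mk ℝ φ hφ → φ ⬝ᵥ v ≠ 0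
  dynamics : ∀ (γs : ℕ → Γ) (x y : M),
      (∀ z : M, z ≠ y → Tendsto (fun n => γs n • z) atTop (𝓝 x)) →
      (∀ z : M, z ≠ x → Tendsto (fun n => (γs n)⁻¹ • z) atTop (𝓝 y)) →
      ∀ gs : ℕ → GL (Fin d) ℝ, (∀ n, (gs n : ProjGL d) = ρ (γs n)) →
      ∀ (φ : Fin d → ℝ) (hφ : φ ≠ 0), ξs y = Projectivization.mk ℝ φ hφ →
      ∀ (u : Fin d → ℝ) (hu : ∀ n, (gs n : Matrix (Fin d) (Fin d) ℝ) *ᵥ u ≠ 0),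
        φ ⬝ᵥ u ≠ 0 →
        Tendsto (fun n => Projectivization.mk ℝ ((gs n : Matrix (Fin d) (Fin d) ℝ) *ᵥ u) (hu n))
          atTop (𝓝 (ξ x))

/-- In a connected space, one side of a cut point together with the cut point is connected. -/
theorem aux_side_preconnected {Y : Type*} [TopologicalSpace Y] [PreconnectedSpace Y]
    (y : Y) (U V : Set Y) (hU : IsOpen U) (hV : IsOpen V) (hd : Disjoint U V)
    (hUV : U ∪ V = {y}ᶜ) : IsPreconnected Uᶜ := by
  have hyU : y ∉ U := fun h => by
    have : y ∈ ({y}ᶜ : Set Y) := hUV ▸ Or.inl h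
    exact this rfl
  have key : ∀ T T' : Set Y, IsClosed T → IsClosed T' → Uᶜ ⊆ T ∪ T' → (Uᶜ ∩ T').Nonempty →
      y ∈ T → (Uᶜ ∩ (T ∩ T')).Nonempty := by
    intro T T' hT hT' hsub hne hy
    by_contra hemp
    rw [Set.not_nonempty_iff_eq_empty] at hemp
    have hE : ∀ z, z ∉ U → z ∈ T → z ∈ T' → False := fun z h1 h2 h3 => by
      have : z ∈ Uᶜ ∩ (T ∩ T') := ⟨h1, h2, h3⟩
      rw [hemp] at this; exact this
    have heq : Uᶜ ∩ T' = V ∩ Tᶜ := by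
      ext z
      constructor
      · rintro ⟨h1, h2⟩
        have hzT : z ∉ T := fun h => hE z h1 h h2
        refine ⟨?_, hzT⟩
        have hzy : z ∈ ({y}ᶜ : Set Y) := fun h => hzT (by rw [Set.mem_singleton_iff.1 h]; exact hy)
        rw [← hUV] at hzy
        exact hzy.resolve_left h1
      · rintro ⟨h1, h2⟩
        have hzU : z ∉ U := fun h => Set.disjoint_left.1 hd h h1
        exact ⟨hzU, (hsub hzU).resolve_left h2⟩
    have hcl : IsClopen (Uᶜ ∩ T') :=
      ⟨hU.isClosed_compl.inter hT', heq ▸ hV.inter hT.isOpen_compl⟩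
    have := hcl.eq_univ hne
    have hyT' : y ∈ Uᶜ ∩ T' := this ▸ Set.mem_univ y
    exact hE y hyU hy hyT'.2
  rw [isPreconnected_closed_iff]
  intro T T' hT hT' hsub hne hne'
  rcases hsub (show y ∈ Uᶜ from hyU) with h | h
  · exact key T T' hT hT' hsub hne' h
  · rw [Set.inter_comm T T']
    exact key T' T hT' hT (by rwa [Set.union_comm]) hne h

/-- Existence of non-cut points, in the form of a contradiction. -/
theorem aux_noncut {Y : Type*} [TopologicalSpace Y] [CompactSpace Y] [PreconnectedSpace Y]
    (a b : Y) (hab : b ≠ a) (U V : Y → Set Y)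
    (hU : ∀ y, y ≠ a → IsOpen (U y)) (hV : ∀ y, y ≠ a → IsOpen (V y))
    (hd : ∀ y, y ≠ a → Disjoint (U y) (V y))
    (hUV : ∀ y, y ≠ a → U y ∪ V y = {y}ᶜ)
    (ha : ∀ y, y ≠ a → a ∈ V y) (hne : ∀ y, y ≠ a → (U y).Nonempty) : False := by
  have hyV : ∀ y, y ≠ a → y ∉ V y := fun y hy h => by
    have : y ∈ ({y}ᶜ : Set Y) := (hUV y hy) ▸ Or.inr h
    exact this rfl
  have hyU : ∀ y, y ≠ a → y ∉ U y := fun y hy h => by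
    have : y ∈ ({y}ᶜ : Set Y) := (hUV y hy) ▸ Or.inl h
    exact this rfl
  have haU : ∀ y, y ≠ a → a ∉ U y := fun y hy h => Set.disjoint_left.1 (hd y hy) h (ha y hy)
  have hin : ∀ x y, x ≠ a → y ∈ U x → y ≠ a ∧ (V y)ᶜ ⊆ U x := by
    intro x y hx hy
    have hya : y ≠ a := fun h => haU x hx (h ▸ hy)
    refine ⟨hya, ?_⟩
    have hc := aux_side_preconnected x (U x) (V x) (hU x hx) (hV x hx) (hd x hx) (hUV x hx)
    have hsub : (U x)ᶜ ⊆ V y := by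
      refine hc.subset_right_of_subset_union (hU y hya) (hV y hya) (hd y hya) ?_
        ⟨a, haU x hx, ha y hya⟩
      rw [hUV y hya]
      intro z hz h
      rw [Set.mem_singleton_iff.1 h] at hz
      exact hz hy
    intro z hz
    by_contra h
    exact hz (hsub h)
  have hUsub : ∀ x, x ≠ a → U x ⊆ (V x)ᶜ := fun x hx z h1 h2 =>
    Set.disjoint_left.1 (hd x hx) h1 h2
  obtain ⟨m, hm⟩ := zorn_superset {C : Set Y | ∃ x, x ≠ a ∧ C = (V x)ᶜ} (by
    intro c hc hchain
    rcases c.eq_empty_or_nonempty with rfl | hcne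
    · exact ⟨_, ⟨b, hab, rfl⟩, by simp⟩
    have hI : (⋂₀ c).Nonempty := by
      have : Nonempty c := hcne.to_subtype
      rw [Set.sInter_eq_iInter]
      refine IsCompact.nonempty_iInter_of_directed_nonempty_isCompact_isClosed _ ?_ ?_ ?_ ?_
      · rintro ⟨C, hC⟩ ⟨C', hC'⟩
        rcases hchain.total hC hC' with h | h
        · exact ⟨⟨C, hC⟩, subset_rfl, h⟩
        · exact ⟨⟨C', hC'⟩, h, subset_rfl⟩
      · rintro ⟨C, hC⟩
        obtain ⟨x, hx, rfl⟩ := hc hC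
        exact ⟨x, hyV x hx⟩
      · rintro ⟨C, hC⟩
        obtain ⟨x, hx, rfl⟩ := hc hC
        exact (hV x hx).isClosed_compl.isCompact
      · rintro ⟨C, hC⟩
        obtain ⟨x, hx, rfl⟩ := hc hC
        exact (hV x hx).isClosed_compl
    obtain ⟨z, hz⟩ := hI
    have hza : z ≠ a := by
      obtain ⟨C, hC⟩ := hcne
      obtain ⟨x, hx, rfl⟩ := hc hC
      intro h
      exact hz _ hC (h ▸ ha x hx)
    refine ⟨_, ⟨z, hza, rfl⟩, ?_⟩
    intro C hC
    obtain ⟨x, hx, rfl⟩ := hc hC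
    have hzx : z ∉ V x := hz _ hC
    by_cases h : z = x
    · rw [h]
    · have : z ∈ U x ∪ V x := by rw [hUV x hx]; exact h
      exact ((hin x z hx (this.resolve_right hzx)).2).trans (hUsub x hx))
  obtain ⟨⟨x, hx, rfl⟩, hmin⟩ := hm
  obtain ⟨y, hy⟩ := hne x hx
  obtain ⟨hya, hsub⟩ := hin x y hx hy
  have := hmin ⟨y, hya, rfl⟩ (hsub.trans (hUsub x hx))
  exact hyU x hx (hsub (this (hyV x hx)))

/-- Characterisation of the arc. -/
theorem aux_arc {X : Type*} [MetricSpace X] [CompactSpace X] [PreconnectedSpace X]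
    (p q : X) (hpq : p ≠ q) (L R : X → Set X)
    (hL : ∀ y, IsOpen (L y)) (hR : ∀ y, IsOpen (R y))
    (hd : ∀ y, Disjoint (L y) (R y)) (hLR : ∀ y, L y ∪ R y = {y}ᶜ)
    (hp : ∀ y, y ≠ p → p ∈ L y) (hq : ∀ y, y ≠ q → q ∈ R y) :
    ∃ e : X → ℝ, Continuous e ∧ Function.Injective e ∧ e p = 0 ∧ e q = 1 ∧
      Set.range e = Set.Icc 0 1 := by
  have hyL : ∀ y, y ∉ L y := fun y h => by
    have : y ∈ ({y}ᶜ : Set X) := (hLR y) ▸ Or.inl h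
    exact this rfl
  have hyR : ∀ y, y ∉ R y := fun y h => by
    have : y ∈ ({y}ᶜ : Set X) := (hLR y) ▸ Or.inr h
    exact this rfl
  have hLnR : ∀ y z, z ∈ L y → z ∉ R y := fun y z h1 h2 => Set.disjoint_left.1 (hd y) h1 h2
  have htri : ∀ y z, z ≠ y → z ∈ L y ∨ z ∈ R y := fun y z h => by
    have : z ∈ L y ∪ R y := by rw [hLR y]; exact h
    exact this
  have hcL : ∀ y, IsPreconnected (L y)ᶜ := fun y =>
    aux_side_preconnected y (L y) (R y) (hL y) (hR y) (hd y) (hLR y)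
  have hcR : ∀ y, IsPreconnected (R y)ᶜ := fun y =>
    aux_side_preconnected y (R y) (L y) (hR y) (hL y) (hd y).symm
      (by rw [Set.union_comm]; exact hLR y)
  -- order facts
  have hA : ∀ x y, x ∈ L y → (R x)ᶜ ⊆ L y := by
    intro x y hx
    have hxq : x ≠ q := by
      rintro rfl
      by_cases h : y = x
      · exact hyL y (h ▸ hx)
      · exact hLnR y _ hx (hq y h)
    have hsub : (L y)ᶜ ⊆ R x := by
      refine (hcL y).subset_right_of_subset_union (hL x) (hR x) (hd x) ?_ ⟨q, ?_, hq x hxq⟩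
      · rw [hLR x]
        intro z hz h
        rw [Set.mem_singleton_iff.1 h] at hz
        exact hz hx
      · intro h
        by_cases h' : y = q
        · exact hyL y (by rw [h']; rw [h'] at h; exact h)
        · exact hLnR y _ h (hq y h')
    intro z hz
    by_contra h
    exact hz (hsub h)
  have hB : ∀ x y, x ∈ L y → y ∈ R x := by
    intro x y hx
    by_contra h
    exact hyL y (hA x y hx h)
  have hC : ∀ x y, x ∈ R y → y ∈ L x := by
    intro x y hx
    have hxp : x ≠ p := by
      rintro rfl
      by_cases h : y = x
      · exact hyR y (h ▸ hx)
      · exact hLnR y _ (hp y h) hx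
    have hsub : (R y)ᶜ ⊆ L x := by
      refine (hcR y).subset_left_of_subset_union (hL x) (hR x) (hd x) ?_ ⟨p, ?_, hp x hxp⟩
      · rw [hLR x]
        intro z hz h
        rw [Set.mem_singleton_iff.1 h] at hz
        exact hz hx
      · intro h
        by_cases h' : y = p
        · exact hyR y (by rw [h']; rw [h'] at h; exact h)
        · exact hLnR y _ (hp y h') h
    exact hsub (hyR y)
  have hLsub : ∀ y, L y ⊆ (R y)ᶜ := fun y z h => hLnR y z h
  have hCd : ∀ y z, z ∈ (R y)ᶜ → z = y ∨ z ∈ L y := fun y z h => by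
    by_cases h' : z = y
    · exact Or.inl h'
    · exact Or.inr ((htri y z h').resolve_right h)
  -- density
  have hdense : ∀ y t, t ∈ R y → ∃ s, s ∈ R y ∧ t ∈ R s := by
    intro y t ht
    by_contra hcon
    push Not at hcon
    have hcl : IsClopen (R y) := by
      refine ⟨?_, hR y⟩
      have : R y = (L t)ᶜ := by
        ext s
        constructor
        · intro hs h
          exact hcon s hs (hB s t h)
        · intro hs
          by_contra h
          exact hs (hA y t (hC t y ht) h)
      rw [this]
      exact (hL t).isClosed_compl
    have := hcl.eq_univ ⟨t, ht⟩
    exact hyR y (this ▸ Set.mem_univ y)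
  have hnhd : ∀ y ε, 0 < ε → ∃ W, IsOpen W ∧ y ∈ W ∧ ∀ z ∈ W, (R z)ᶜ ⊆ (R y)ᶜ ∪ Metric.ball y ε := by
    intro y ε hε
    by_cases hyq : y = q
    · refine ⟨Set.univ, isOpen_univ, trivial, ?_⟩
      intro z _ t _
      left
      intro h
      have h1 := hC t y h
      rw [hyq] at h1
      by_cases h' : t = q
      · exact hyL q (by rw [h'] at h1; exact h1)
      · exact hLnR t q h1 (hq t h')
    have hqR : q ∈ R y := hq y hyq
    have hK : IsCompact ((L y ∪ Metric.ball y ε)ᶜ) :=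
      ((hL y).union Metric.isOpen_ball).isClosed_compl.isCompact
    have : Nonempty (R y) := ⟨⟨q, hqR⟩⟩
    obtain ⟨⟨s, hs⟩, hsub⟩ := hK.elim_directed_cover (fun s : R y => R s.1) (fun s => hR _) (by
      intro t ht
      have hty : t ≠ y := by
        rintro rfl
        exact ht (Or.inr (Metric.mem_ball_self hε))
      have : t ∈ R y := (htri y t hty).resolve_left fun h => ht (Or.inl h)
      obtain ⟨s, hs, hts⟩ := hdense y t this
      exact Set.mem_iUnion.2 ⟨⟨s, hs⟩, hts⟩) (by
      have hmono : ∀ a b, a ∈ L b → R b ⊆ R a := by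
        intro a b hab z hz
        by_contra h
        exact hLnR b z (hA a b hab h) hz
      rintro ⟨a, ha⟩ ⟨b, hb⟩
      by_cases hab : a = b
      · subst hab
        exact ⟨⟨a, ha⟩, subset_rfl, subset_rfl⟩
      rcases htri b a hab with h | h
      · exact ⟨⟨a, ha⟩, subset_rfl, hmono a b h⟩
      · exact ⟨⟨b, hb⟩, hmono b a (hC a b h), subset_rfl⟩)
    refine ⟨L s, hL s, hC s y hs, ?_⟩
    intro z hz t ht
    have h1 : t ∉ R s := hLnR s t (hA z s hz ht)
    have h2 : t ∈ L y ∪ Metric.ball y ε := by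
      by_contra h
      exact h1 (hsub h)
    rcases h2 with h2 | h2
    · exact Or.inl (hLsub y h2)
    · exact Or.inr h2
  have hCne : ∀ y, ((R y)ᶜ).Nonempty := fun y => ⟨y, hyR y⟩
  have hcont : ∀ d : X, Continuous fun y => Metric.infDist d (R y)ᶜ := by
    intro d
    rw [continuous_iff_continuousAt]
    intro y
    rw [ContinuousAt, tendsto_order]
    constructor
    · intro r hr
      set ε := Metric.infDist d (R y)ᶜ - r with hεd
      have hε : 0 < ε := sub_pos.2 hr
      obtain ⟨W, hW, hyW, hWs⟩ := hnhd y (ε / 2) (by linarith)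
      filter_upwards [hW.mem_nhds hyW] with z hz
      have : r + ε / 2 ≤ Metric.infDist d (R z)ᶜ := by
        rw [Metric.le_infDist (hCne z)]
        intro t ht
        rcases hWs z hz ht with h | h
        · have := Metric.infDist_le_dist_of_mem (x := d) h
          linarith
        · have h1 := Metric.infDist_le_dist_of_mem (x := d) (show y ∈ (R y)ᶜ from hyR y)
          have h2 : dist t y < ε / 2 := h
          have h3 := dist_triangle d t y
          linarith
      linarith
    · intro r hr
      obtain ⟨t, ht, htd⟩ := (Metric.infDist_lt_iff (hCne y)).1 hr
      rcases hCd y t ht with h | h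
      · subst h
        have : ∀ᶠ z in 𝓝 t, dist d z < r :=
          (continuous_const.dist continuous_id).continuousAt.eventually_lt continuousAt_const htd
        filter_upwards [this] with z hz
        exact (Metric.infDist_le_dist_of_mem (show z ∈ (R z)ᶜ from hyR z)).trans_lt hz
      · filter_upwards [(hR t).mem_nhds (hB t y h)] with z hz
        exact (Metric.infDist_le_dist_of_mem (show t ∈ (R z)ᶜ from hLsub z (hC z t hz))).trans_lt htd
  have : Nonempty X := ⟨p⟩
  obtain ⟨u, hu⟩ := TopologicalSpace.exists_dense_seq X
  set D := Metric.diam (Set.univ : Set X) with hD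
  have hbd : ∀ d y, Metric.infDist d (R y)ᶜ ≤ D := fun d y =>
    (Metric.infDist_le_dist_of_mem (show y ∈ (R y)ᶜ from hyR y)).trans
      (Metric.dist_le_diam_of_mem isCompact_univ.isBounded trivial trivial)
  have hsumm0 : Summable fun n : ℕ => (1 / 2 : ℝ) ^ n * D :=
    (summable_geometric_two).mul_right D
  have hnorm : ∀ n y, ‖(1 / 2 : ℝ) ^ n * Metric.infDist (u n) (R y)ᶜ‖ ≤ (1 / 2 : ℝ) ^ n * D := by
    intro n y
    rw [Real.norm_of_nonneg (mul_nonneg (by positivity) Metric.infDist_nonneg)]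
    exact mul_le_mul_of_nonneg_left (hbd _ _) (by positivity)
  have hsumm : ∀ y, Summable fun n : ℕ => (1 / 2 : ℝ) ^ n * Metric.infDist (u n) (R y)ᶜ :=
    fun y => Summable.of_norm_bounded hsumm0 (fun n => hnorm n y)
  set E : X → ℝ := fun y => ∑' n : ℕ, (1 / 2 : ℝ) ^ n * Metric.infDist (u n) (R y)ᶜ with hE
  have hEc : Continuous E := by
    refine continuous_tsum (fun n => continuous_const.mul (hcont (u n))) hsumm0 hnorm
  have hElt : ∀ x y, x ∈ L y → E y < E x := by
    intro x y hxy
    have hsub : (R x)ᶜ ⊆ (R y)ᶜ := (hA x y hxy).trans (hLsub y)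
    have hyx : y ∉ (R x)ᶜ := fun h => h (hB x y hxy)
    have hpos : 0 < Metric.infDist y (R x)ᶜ :=
      ((hR x).isClosed_compl.notMem_iff_infDist_pos (hCne x)).1 hyx
    obtain ⟨n, hn⟩ := hu.exists_dist_lt y (show 0 < Metric.infDist y (R x)ᶜ / 3 by linarith)
    have hle : ∀ n, Metric.infDist (u n) (R y)ᶜ ≤ Metric.infDist (u n) (R x)ᶜ := fun n =>
      Metric.infDist_le_infDist_of_subset hsub (hCne x)
    refine Summable.tsum_lt_tsum (i := n)
      (fun k => mul_le_mul_of_nonneg_left (hle k) (by positivity)) ?_ (hsumm y) (hsumm x)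
    refine mul_lt_mul_of_pos_left ?_ (by positivity)
    have h1 := Metric.infDist_le_dist_of_mem (x := u n) (show y ∈ (R y)ᶜ from hyR y)
    have h2 := Metric.infDist_le_infDist_add_dist (s := (R x)ᶜ) (x := y) (y := u n)
    rw [dist_comm] at h1
    linarith
  have hpq' : E q < E p := hElt p q (hp q hpq.symm)
  have hEp : ∀ y, E y ≤ E p := fun y => by
    by_cases h : y = p
    · rw [h]
    · exact (hElt p y (hp y h)).le
  have hEq : ∀ y, E q ≤ E y := fun y => by
    by_cases h : y = q
    · rw [h]
    · exact (hElt y q (hC q y (hq y h))).le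
  have hden : 0 < E p - E q := sub_pos.2 hpq'
  have hec : Continuous fun y => (E p - E y) / (E p - E q) :=
    (continuous_const.sub hEc).div_const _
  refine ⟨fun y => (E p - E y) / (E p - E q), hec, ?_, by simp, div_self hden.ne', ?_⟩
  · intro x y hxy
    have hxy' : E x = E y := by
      have := (div_left_inj' hden.ne').1 hxy
      linarith
    by_contra hne
    rcases htri y x hne with h | h
    · exact (hElt x y h).ne' hxy'
    · exact (hElt y x (hC x y h)).ne hxy'
  · apply Set.Subset.antisymm
    · rintro _ ⟨y, rfl⟩
      have h1 := hEp y
      have h2 := hEq y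
      exact ⟨div_nonneg (by linarith) hden.le, (div_le_one hden).2 (by linarith)⟩
    · have := (isPreconnected_range hec).Icc_subset (Set.mem_range_self p) (Set.mem_range_self q)
      simpa [div_self hden.ne'] using this

/-- The standard parametrisation of the circle. -/
noncomputable def auxCirc (t : ℝ) : Circle1 :=
  ⟨!₂[Real.cos (2 * Real.pi * t), Real.sin (2 * Real.pi * t)], by
    rw [mem_sphere_zero_iff_norm, EuclideanSpace.norm_eq]
    simp⟩

theorem auxCirc_continuous : Continuous auxCirc := by
  unfold auxCirc
  refine Continuous.subtype_mk ?_ _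
  refine (PiLp.continuous_toLp 2 _).comp ?_
  refine continuous_pi fun i => ?_
  fin_cases i <;> simp <;> fun_prop

theorem auxCirc_inj {s t : ℝ} (hs : s ∈ Set.Icc (0 : ℝ) 1) (ht : t ∈ Set.Icc (0 : ℝ) 1)
    (h : auxCirc s = auxCirc t) : s = t ∨ (s = 0 ∧ t = 1) ∨ (s = 1 ∧ t = 0) := by
  have h0 := congrArg Subtype.val h
  have hc : Real.cos (2 * Real.pi * s) = Real.cos (2 * Real.pi * t) := by
    simpa [auxCirc] using congrArg (fun v : EuclideanSpace ℝ (Fin 2) => v 0) h0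
  have hsn : Real.sin (2 * Real.pi * s) = Real.sin (2 * Real.pi * t) := by
    simpa [auxCirc] using congrArg (fun v : EuclideanSpace ℝ (Fin 2) => v 1) h0
  obtain ⟨k, hk⟩ := Real.Angle.angle_eq_iff_two_pi_dvd_sub.1 (Real.Angle.cos_sin_inj hc hsn)
  have hk' : s - t = k := by
    have : 2 * Real.pi * (s - t) = 2 * Real.pi * k := by rw [← hk]; ring
    exact mul_left_cancel₀ (by positivity) this
  have h1 : (k : ℝ) ≤ 1 := by rw [← hk']; linarith [hs.2, ht.1]
  have h2 : (-1 : ℝ) ≤ k := by rw [← hk']; linarith [hs.1, ht.2]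
  have h1' : k ≤ 1 := by exact_mod_cast h1
  have h2' : -1 ≤ k := by exact_mod_cast h2
  obtain rfl | rfl | rfl : k = -1 ∨ k = 0 ∨ k = 1 := by omega
  · push_cast at hk'
    right; left
    constructor <;> linarith [hs.1, hs.2, ht.1, ht.2]
  · push_cast at hk'
    left; linarith
  · push_cast at hk'
    right; right
    constructor <;> linarith [hs.1, hs.2, ht.1, ht.2]

theorem auxCirc_surj (z : Circle1) : ∃ t ∈ Set.Icc (0 : ℝ) 1, auxCirc t = z := by
  obtain ⟨v, hv⟩ := z
  rw [mem_sphere_zero_iff_norm, EuclideanSpace.norm_eq, Real.sqrt_eq_one] at hv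
  simp only [Fin.sum_univ_two, Real.norm_eq_abs, sq_abs] at hv
  set w : ℂ := ⟨v 0, v 1⟩ with hw
  have hwn : ‖w‖ = 1 := by
    rw [Complex.norm_def, Complex.normSq_apply, Real.sqrt_eq_one]
    simp only [hw]; nlinarith
  have hw0 : w ≠ 0 := by
    intro h; rw [h] at hwn; simp at hwn
  have hc := Complex.cos_arg hw0
  have hs := Complex.sin_arg w
  rw [hwn, div_one] at hc hs
  set a := Complex.arg w
  refine ⟨Int.fract (a / (2 * Real.pi)), ⟨Int.fract_nonneg _, (Int.fract_lt_one _).le⟩, ?_⟩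
  have he : 2 * Real.pi * Int.fract (a / (2 * Real.pi)) =
      a - (⌊a / (2 * Real.pi)⌋ : ℝ) * (2 * Real.pi) := by
    rw [Int.fract]
    have := Real.pi_pos
    field_simp
  apply Subtype.ext
  ext i
  fin_cases i
  · simp only [auxCirc, he, Real.cos_sub_int_mul_two_pi, hc, hw]; simp
  · simp only [auxCirc, he, Real.sin_sub_int_mul_two_pi, hs, hw]; simp

/-- Topological core: a space `X` mapping onto `M` by gluing two points `p, q`, each of whose
other points cuts `X` between `p` and `q`, forces `M` to be a circle. -/
theorem aux_circle {X M : Type*} [MetricSpace X] [CompactSpace X]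
    [TopologicalSpace M] [T2Space M] [CompactSpace M] [PreconnectedSpace M]
    (g : X → M) (hg : Continuous g) (hsurj : Function.Surjective g)
    (p q : X) (hpq : p ≠ q) (hgpq : g p = g q)
    (hinj : ∀ x y, g x = g y → x = y ∨ (x = p ∧ y = q) ∨ (x = q ∧ y = p))
    (P N : X → Set X)
    (hP : ∀ y, y ≠ p → y ≠ q → IsOpen (P y)) (hN : ∀ y, y ≠ p → y ≠ q → IsOpen (N y))
    (hd : ∀ y, y ≠ p → y ≠ q → Disjoint (P y) (N y))
    (hPN : ∀ y, y ≠ p → y ≠ q → P y ∪ N y = {y}ᶜ)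
    (hpP : ∀ y, y ≠ p → y ≠ q → p ∈ P y) (hqN : ∀ y, y ≠ p → y ≠ q → q ∈ N y)
    (hcl : ∀ y, y ≠ p → y ≠ q → ∀ W, IsOpen W → y ∈ W → (W ∩ N y).Nonempty)
    (hiso : ∀ W : Set X, IsOpen W → p ∈ W → ∃ z ∈ W, z ≠ p) :
    Nonempty (M ≃ₜ Circle1) := by
  classical
  have hgcl : IsClosedMap g := hg.isClosedMap
  have hquot : IsQuotientMap g := hgcl.isQuotientMap hg hsurj
  have hclopen : ∀ D : Set X, IsClopen D → p ∉ D → q ∉ D → D = ∅ := by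
    intro D hD hpD hqD
    by_contra hne
    have hne' : D.Nonempty := Set.nonempty_iff_ne_empty.2 hne
    have hpre : g ⁻¹' (g '' D) = D := by
      apply Set.Subset.antisymm _ (Set.subset_preimage_image g D)
      rintro x ⟨y, hy, hyx⟩
      rcases hinj y x hyx with h | h | h
      · exact h ▸ hy
      · exact absurd (h.1 ▸ hy) hpD
      · exact absurd (h.1 ▸ hy) hqD
    have hclo : IsClopen (g '' D) :=
      ⟨hgcl _ hD.1, hquot.isOpen_preimage.1 (by rw [hpre]; exact hD.2)⟩
    have huniv := hclo.eq_univ (hne'.image g)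
    have : p ∈ g ⁻¹' (g '' D) := by rw [huniv]; trivial
    rw [hpre] at this
    exact hpD this
  by_cases hconn : PreconnectedSpace X
  · obtain ⟨e, hec, hei, hep, heq, her⟩ := aux_arc p q hpq
      (fun y => if y = p then ∅ else if y = q then {q}ᶜ else P y)
      (fun y => if y = p then {p}ᶜ else if y = q then ∅ else N y)
      (by
        intro y
        split_ifs with h1 h2
        · exact isOpen_empty
        · exact isOpen_compl_singleton
        · exact hP y h1 h2)
      (by
        intro y
        split_ifs with h1 h2
        · exact isOpen_compl_singleton
        · exact isOpen_empty
        · exact hN y h1 h2)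
      (by
        intro y
        split_ifs with h1 h2
        · exact Set.empty_disjoint _
        · exact Set.disjoint_empty _
        · exact hd y h1 h2)
      (by
        intro y
        split_ifs with h1 h2
        · rw [h1, Set.empty_union]
        · rw [h2, Set.union_empty]
        · exact hPN y h1 h2)
      (by
        intro y hy
        split_ifs with h1 h2
        · exact absurd h1 hy
        · exact hpq
        · exact hpP y hy h2)
      (by
        intro y hy
        split_ifs with h2
        · exact hpq.symm
        · exact hqN y h2 hy)
    have heI : ∀ x, e x ∈ Set.Icc (0 : ℝ) 1 := fun x => her ▸ Set.mem_range_self x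
    have h01 : auxCirc 0 = auxCirc 1 := by
      apply Subtype.ext
      ext i
      fin_cases i <;> simp [auxCirc]
    have hfac : ∀ x y, g x = g y ↔ auxCirc (e x) = auxCirc (e y) := by
      intro x y
      constructor
      · intro h
        rcases hinj x y h with h | ⟨h1, h2⟩ | ⟨h1, h2⟩
        · rw [h]
        · rw [h1, h2, hep, heq, h01]
        · rw [h1, h2, hep, heq, h01]
      · intro h
        rcases auxCirc_inj (heI x) (heI y) h with h | ⟨h1, h2⟩ | ⟨h1, h2⟩
        · rw [hei h]
        · rw [hei (h1.trans hep.symm), hei (h2.trans heq.symm), hgpq]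
        · rw [hei (h1.trans heq.symm), hei (h2.trans hep.symm), hgpq]
    let k : M → Circle1 := fun m => auxCirc (e (Function.surjInv hsurj m))
    have hk : ∀ x, k (g x) = auxCirc (e x) := fun x =>
      (hfac _ _).1 (Function.surjInv_eq hsurj (g x))
    have hkc : Continuous k := by
      rw [hquot.continuous_iff]
      have : k ∘ g = fun x => auxCirc (e x) := funext hk
      rw [this]
      exact auxCirc_continuous.comp hec
    have hkb : Function.Bijective k := by
      constructor
      · intro m n hmn
        obtain ⟨x, rfl⟩ := hsurj m
        obtain ⟨y, rfl⟩ := hsurj n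
        rw [hk, hk] at hmn
        exact (hfac x y).2 hmn
      · intro z
        obtain ⟨t, ht, rfl⟩ := auxCirc_surj z
        rw [← her] at ht
        obtain ⟨x, rfl⟩ := ht
        exact ⟨g x, hk x⟩
    exact ⟨Continuous.homeoOfEquivCompactToT2 (f := Equiv.ofBijective k hkb) hkc⟩
  · exfalso
    have hex : ∃ D : Set X, IsClopen D ∧ D.Nonempty ∧ D ≠ Set.univ := by
      by_contra hcon
      push Not at hcon
      apply hconn
      rw [preconnectedSpace_iff_clopen]
      intro s hs
      by_cases h : s.Nonempty
      · exact Or.inr (hcon s hs h)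
      · exact Or.inl (Set.not_nonempty_iff_eq_empty.1 h)
    have hexB : ∃ B : Set X, IsClopen B ∧ p ∈ B ∧ q ∉ B := by
      obtain ⟨D, hD, hDne, hDu⟩ := hex
      have hDne' : D ≠ ∅ := Set.nonempty_iff_ne_empty.1 hDne
      have hDc : Dᶜ ≠ ∅ := fun h => hDu (Set.compl_empty_iff.1 h)
      by_cases hp : p ∈ D
      · refine ⟨D, hD, hp, fun hq => hDc (hclopen _ hD.compl ?_ ?_)⟩
        · exact fun h => h hp
        · exact fun h => h hq
      · refine ⟨Dᶜ, hD.compl, hp, fun hq => hDne' (hclopen _ hD hp hq)⟩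
    obtain ⟨B, hB, hpB, hqB⟩ := hexB
    have hBq : ∀ y ∈ B, y ≠ q := fun y hy h => hqB (h ▸ hy)
    have hBc : CompactSpace B := isCompact_iff_compactSpace.1 hB.1.isCompact
    have hemb : ∀ s : Set B, IsClopen s → IsClopen (Subtype.val '' s) := fun s hs =>
      ⟨hB.1.isClosedMap_subtype_val _ hs.1, hB.2.isOpenMap_subtype_val _ hs.2⟩
    have hnoq : ∀ s : Set B, q ∉ Subtype.val '' s := by
      rintro s ⟨z, _, hz⟩
      exact hBq z z.2 hz
    have hempty : ∀ s : Set B, IsClopen s → (⟨p, hpB⟩ : B) ∉ s → s = ∅ := by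
      intro s hs hps
      have := hclopen _ (hemb s hs) (by
        rintro ⟨z, hz, hzp⟩
        exact hps (by convert hz; exact hzp.symm)) (hnoq s)
      exact Set.image_eq_empty.1 this
    have hBp : PreconnectedSpace B := by
      rw [preconnectedSpace_iff_clopen]
      intro s hs
      by_cases h : (⟨p, hpB⟩ : B) ∈ s
      · right
        have := hempty sᶜ hs.compl (fun h' => h' h)
        exact Set.compl_empty_iff.1 this
      · exact Or.inl (hempty s hs h)
    obtain ⟨b, hbB, hbp⟩ := hiso B hB.2 hpB
    have hnep : ∀ y : B, y ≠ ⟨p, hpB⟩ → y.1 ≠ p := fun y hy h => hy (Subtype.ext h)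
    refine aux_noncut (Y := B) ⟨p, hpB⟩ ⟨b, hbB⟩ (fun h => hbp (congrArg Subtype.val h))
      (fun y => Subtype.val ⁻¹' N y.1) (fun y => Subtype.val ⁻¹' P y.1)
      (fun y hy => (hN y (hnep y hy) (hBq y y.2)).preimage continuous_subtype_val)
      (fun y hy => (hP y (hnep y hy) (hBq y y.2)).preimage continuous_subtype_val)
      (fun y hy => (hd y (hnep y hy) (hBq y y.2)).symm.preimage _)
      ?_
      (fun y hy => hpP y (hnep y hy) (hBq y y.2))
      ?_
    · intro y hy
      rw [← Set.preimage_union, Set.union_comm, hPN y (hnep y hy) (hBq y y.2)]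
      ext z
      simp [Subtype.ext_iff]
    · intro y hy
      obtain ⟨z, hzB, hz⟩ := hcl y (hnep y hy) (hBq y y.2) B hB.2 y.2
      exact ⟨⟨z, hzB⟩, hz⟩

/-- The rank one projector of a nonzero vector. -/
noncomputable def auxProj {d : ℕ} (v : Fin d → ℝ) : Matrix (Fin d) (Fin d) ℝ :=
  (v ⬝ᵥ v)⁻¹ • vecMulVec v v

theorem auxProj_smul {d : ℕ} (v : Fin d → ℝ) (t : ℝ) (ht : t ≠ 0) :
    auxProj (t • v) = auxProj v := by
  ext i j
  simp only [auxProj, vecMulVec_apply, Matrix.smul_apply, Pi.smul_apply, smul_eq_mul,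
    smul_dotProduct, dotProduct_smul, mul_inv]
  field_simp

noncomputable def auxProjLift {d : ℕ} (x : Projectivization ℝ (Fin d → ℝ)) :
    Matrix (Fin d) (Fin d) ℝ :=
  Projectivization.lift (fun v : { v : Fin d → ℝ // v ≠ 0 } => auxProj v.1) (by
    rintro ⟨a, ha⟩ ⟨b, hb⟩ t h
    have h' : a = t • b := h
    have ht : t ≠ 0 := by
      rintro rfl
      exact ha (by simpa using h')
    simp only [h', auxProj_smul b t ht]) x

theorem auxProjLift_mk {d : ℕ} (v : Fin d → ℝ) (hv : v ≠ 0) :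
    auxProjLift (Projectivization.mk ℝ v hv) = auxProj v := by
  simp [auxProjLift, Projectivization.lift_mk]

theorem auxProjLift_continuous {d : ℕ} :
    Continuous (auxProjLift : Projectivization ℝ (Fin d → ℝ) → Matrix (Fin d) (Fin d) ℝ) := by
  have hq : IsQuotientMap (Quotient.mk (projectivizationSetoid ℝ (Fin d → ℝ))) :=
    isQuotientMap_quotient_mk'
  refine hq.continuous_iff.2 ?_
  change Continuous fun v : { v : Fin d → ℝ // v ≠ 0 } => auxProj v.1
  have h1 : Continuous fun v : { v : Fin d → ℝ // v ≠ 0 } => (v.1 ⬝ᵥ v.1)⁻¹ := by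
    have h0 : Continuous fun v : { v : Fin d → ℝ // v ≠ 0 } => v.1 ⬝ᵥ v.1 :=
      Continuous.dotProduct continuous_subtype_val continuous_subtype_val
    exact h0.inv₀ fun v h => v.2 (dotProduct_self_eq_zero.1 h)
  have h2 : Continuous fun v : { v : Fin d → ℝ // v ≠ 0 } => vecMulVec v.1 v.1 :=
    Continuous.matrix_vecMulVec continuous_subtype_val continuous_subtype_val
  exact h1.smul h2

theorem auxProj_unit_inj {d : ℕ} {v w : Fin d → ℝ} (hv : v ⬝ᵥ v = 1) (hw : w ⬝ᵥ w = 1)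
    (h : auxProj v = auxProj w) : v = w ∨ v = -w := by
  simp only [auxProj, hv, hw, inv_one, one_smul] at h
  have h1 : (v ⬝ᵥ w) • w = v := by
    have h2 : vecMulVec v v *ᵥ v = vecMulVec w w *ᵥ v := by rw [h]
    ext i
    have h3 := congrFun h2 i
    simp only [vecMulVec_mulVec, hv] at h3
    simp at h3 ⊢
    rw [h3, dotProduct_comm w v]; ring
  have h4 : (v ⬝ᵥ w) * (v ⬝ᵥ w) = 1 := by
    have : v ⬝ᵥ ((v ⬝ᵥ w) • w) = 1 := by rw [h1, hv]
    rwa [dotProduct_smul, smul_eq_mul] at this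
  rcases mul_self_eq_one_iff.1 h4 with h5 | h5
  · left; rw [← h1, h5, one_smul]
  · right; rw [← h1, h5, neg_one_smul]

/-- Unit vectors spanning points of the limit set. -/
def auxS {M : Type*} {d : ℕ} (ξ : M → Projectivization ℝ (Fin d → ℝ)) :
    Set (M × (Fin d → ℝ)) :=
  {s | s.2 ⬝ᵥ s.2 = 1 ∧ ∃ hv : s.2 ≠ 0, ξ s.1 = Projectivization.mk ℝ s.2 hv}

theorem aux_ne_zero {d : ℕ} {v : Fin d → ℝ} (h : v ⬝ᵥ v = 1) : v ≠ 0 := by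
  rintro rfl
  simp at h

theorem aux_mk_eq {d : ℕ} (v : Fin d → ℝ) (h : v ⬝ᵥ v = 1) (x : Projectivization ℝ (Fin d → ℝ))
    (hx : auxProj v = auxProjLift x) : x = Projectivization.mk ℝ v (aux_ne_zero h) := by
  induction x using Projectivization.ind with
  | h w hw =>
    rw [auxProjLift_mk] at hx
    have hww : 0 < w ⬝ᵥ w := lt_of_le_of_ne (by simpa using dotProduct_star_self_nonneg w)
      (fun h => hw (dotProduct_self_eq_zero.1 h.symm))
    have hs : (Real.sqrt (w ⬝ᵥ w))⁻¹ ≠ 0 := inv_ne_zero (Real.sqrt_pos.2 hww).ne'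
    have h1 : ((Real.sqrt (w ⬝ᵥ w))⁻¹ • w) ⬝ᵥ ((Real.sqrt (w ⬝ᵥ w))⁻¹ • w) = 1 := by
      rw [smul_dotProduct, dotProduct_smul, smul_eq_mul, smul_eq_mul, ← mul_assoc, ← mul_inv,
        Real.mul_self_sqrt hww.le, inv_mul_cancel₀ hww.ne']
    rw [Projectivization.mk_eq_mk_iff']
    rcases auxProj_unit_inj h h1 (by rw [auxProj_smul _ _ hs, hx]) with h2 | h2
    · refine ⟨Real.sqrt (w ⬝ᵥ w), ?_⟩
      rw [h2, smul_smul, mul_inv_cancel₀ (Real.sqrt_pos.2 hww).ne', one_smul]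
    · refine ⟨-Real.sqrt (w ⬝ᵥ w), ?_⟩
      rw [h2, smul_neg, neg_smul, neg_neg, smul_smul,
        mul_inv_cancel₀ (Real.sqrt_pos.2 hww).ne', one_smul]

theorem auxS_eq {M : Type*} {d : ℕ} (ξ : M → Projectivization ℝ (Fin d → ℝ)) :
    auxS ξ = {s | s.2 ⬝ᵥ s.2 = 1 ∧ vecMulVec s.2 s.2 = auxProjLift (ξ s.1)} := by
  ext ⟨x, v⟩
  simp only [auxS, Set.mem_ofPred_eq]
  constructor
  · rintro ⟨h, hv, he⟩
    refine ⟨h, ?_⟩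
    rw [he, auxProjLift_mk, auxProj, h, inv_one, one_smul]
  · rintro ⟨h, he⟩
    refine ⟨h, aux_ne_zero h, aux_mk_eq v h _ ?_⟩
    rw [← he, auxProj, h, inv_one, one_smul]

theorem auxS_compact {M : Type*} [TopologicalSpace M] [CompactSpace M] {d : ℕ}
    (ξ : M → Projectivization ℝ (Fin d → ℝ)) (hξ : Continuous ξ) : IsCompact (auxS ξ) := by
  have hcl : IsClosed (auxS ξ) := by
    rw [auxS_eq]
    refine IsClosed.inter (isClosed_eq ?_ continuous_const) (isClosed_eq ?_ ?_)
    · exact continuous_snd.dotProduct continuous_snd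
    · exact continuous_snd.matrix_vecMulVec continuous_snd
    · exact auxProjLift_continuous.comp (hξ.comp continuous_fst)
  refine (isCompact_univ.prod (isCompact_closedBall (0 : Fin d → ℝ) 1)).of_isClosed_subset hcl ?_
  rintro ⟨x, v⟩ ⟨h, -⟩
  refine ⟨trivial, ?_⟩
  rw [mem_closedBall_zero_iff, pi_norm_le_iff_of_nonneg zero_le_one]
  intro i
  have h1 : v i * v i ≤ v ⬝ᵥ v :=
    Finset.single_le_sum (f := fun i => v i * v i) (fun j _ => mul_self_nonneg _)
      (Finset.mem_univ i)
  have h2 : v ⬝ᵥ v = 1 := h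
  rw [Real.norm_eq_abs]
  exact abs_le_one_iff_mul_self_le_one.2 (by linarith)

theorem auxS_neg {M : Type*} {d : ℕ} (ξ : M → Projectivization ℝ (Fin d → ℝ)) {x : M}
    {v : Fin d → ℝ} (h : (x, v) ∈ auxS ξ) : (x, -v) ∈ auxS ξ := by
  rw [auxS_eq] at h ⊢
  refine ⟨by simpa using h.1, ?_⟩
  have := h.2
  dsimp only at this ⊢
  rw [← this, neg_vecMulVec, vecMulVec_neg, neg_neg]

theorem auxS_fiber {M : Type*} {d : ℕ} (ξ : M → Projectivization ℝ (Fin d → ℝ)) {x : M}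
    {v w : Fin d → ℝ} (h : (x, v) ∈ auxS ξ) (h' : (x, w) ∈ auxS ξ) : v = w ∨ v = -w := by
  rw [auxS_eq] at h h'
  obtain ⟨h1, h2⟩ := h
  obtain ⟨h3, h4⟩ := h'
  dsimp only at *
  refine auxProj_unit_inj h1 h3 ?_
  simp only [auxProj, h1, h3, h2, h4]

theorem auxS_exists {M : Type*} {d : ℕ} (ξ : M → Projectivization ℝ (Fin d → ℝ)) {x : M}
    {v : Fin d → ℝ} (hv : v ≠ 0) (h : ξ x = Projectivization.mk ℝ v hv) :
    ∃ t : ℝ, (x, t • v) ∈ auxS ξ := by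
  have hww : 0 < v ⬝ᵥ v := lt_of_le_of_ne (by simpa using dotProduct_star_self_nonneg v)
      (fun h => hv (dotProduct_self_eq_zero.1 h.symm))
  have hs : (Real.sqrt (v ⬝ᵥ v))⁻¹ ≠ 0 := inv_ne_zero (Real.sqrt_pos.2 hww).ne'
  have h1 : ((Real.sqrt (v ⬝ᵥ v))⁻¹ • v) ⬝ᵥ ((Real.sqrt (v ⬝ᵥ v))⁻¹ • v) = 1 := by
    rw [smul_dotProduct, dotProduct_smul, smul_eq_mul, smul_eq_mul, ← mul_assoc, ← mul_inv,
      Real.mul_self_sqrt hww.le, inv_mul_cancel₀ hww.ne']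
  refine ⟨(Real.sqrt (v ⬝ᵥ v))⁻¹, h1, aux_ne_zero h1, ?_⟩
  refine aux_mk_eq _ h1 _ ?_
  rw [auxProj_smul _ _ hs, h, auxProjLift_mk]

/-- Compactness: perturbing a nonnegative function to a positive one. -/
theorem aux_perturb {Z : Type*} [TopologicalSpace Z] {K : Set Z} (hK : IsCompact K)
    (α β : Z → ℝ) (hα : Continuous α) (hβ : Continuous β) (h0 : ∀ t ∈ K, 0 ≤ α t)
    (h1 : ∀ t ∈ K, α t = 0 → 0 < β t) : ∃ ε : ℝ, 0 < ε ∧ ∀ t ∈ K, 0 < α t + ε * β t := by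
  have hK' : IsCompact (K ∩ {t | β t ≤ 0}) :=
    hK.inter_right (isClosed_le hβ continuous_const)
  rcases (K ∩ {t | β t ≤ 0}).eq_empty_or_nonempty with he | hne
  · refine ⟨1, one_pos, fun t ht => ?_⟩
    have : 0 < β t := by
      by_contra h
      have : t ∈ K ∩ {t | β t ≤ 0} := ⟨ht, not_lt.1 h⟩
      rw [he] at this
      exact this
    linarith [h0 t ht]
  · obtain ⟨m, hm, hmin⟩ := hK'.exists_isMinOn hne hα.continuousOn
    obtain ⟨C, hC⟩ := hK.exists_bound_of_continuousOn hβ.continuousOn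
    have hδ : 0 < α m := lt_of_le_of_ne (h0 m hm.1) fun h =>
      absurd (h1 m hm.1 h.symm) (not_lt.2 hm.2)
    have hC0 : 0 ≤ C := (norm_nonneg _).trans (hC m hm.1)
    have hε : 0 < α m / (C + 1) := by positivity
    refine ⟨α m / (C + 1), hε, fun t ht => ?_⟩
    by_cases hb : β t ≤ 0
    · have h2 : α m ≤ α t := hmin (show t ∈ K ∩ {t | β t ≤ 0} from ⟨ht, hb⟩)
      have h3 : -C ≤ β t := by
        have := hC t ht
        rw [Real.norm_eq_abs] at this
        exact (abs_le.1 this).1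
      have h4 : α m / (C + 1) * (C + 1) = α m := div_mul_cancel₀ _ (by positivity)
      nlinarith [mul_le_mul_of_nonneg_left h3 hε.le]
    · have := mul_pos hε (not_le.1 hb)
      linarith [h0 t ht]

/-- **Proposition (limit set bounded in an affine chart).**
If `(Γ, M)` is a boundary pair with `M` connected and not homeomorphic to the circle, and
`ρ : Γ → PGL_d(ℝ)` is relatively 1-Anosov with limit maps `ξ, ξs`, then `ξ(M)` is bounded in
an affine chart: some nonzero functional is nonvanishing on all vectors spanning points
of `ξ(M)`. -/
theorem limit_set_bounded_in_affine_chart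
    {Γ M : Type} [Group Γ] [TopologicalSpace M] [MulAction Γ M]
    (hBP : IsBoundaryPair Γ M)
    (hconn : ConnectedSpace M) (hnotcircle : IsEmpty (M ≃ₜ Circle1))
    {d : ℕ} (ρ : Γ →* ProjGL d)
    (ξ ξs : M → Projectivization ℝ (Fin d → ℝ))
    (hAnosov : IsRelOneAnosovPGL ρ ξ ξs) :
    ∃ φ : (Fin d → ℝ) →ₗ[ℝ] ℝ, φ ≠ 0 ∧
      ∀ (x : M) (v : Fin d → ℝ) (hv : v ≠ 0), ξ x = Projectivization.mk ℝ v hv → φ v ≠ 0 := by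
  classical
  have hcomp := hBP.compact
  have hmet := hBP.metrizable
  let fv : M → (Fin d → ℝ) := fun x => (ξs x).rep
  have hfv : ∀ x, fv x ≠ 0 := fun x => (ξs x).rep_nonzero
  have hS := auxS_compact ξ hAnosov.continuous_fst
  have hfcont : ∀ w : Fin d → ℝ, Continuous fun s : M × (Fin d → ℝ) => w ⬝ᵥ s.2 := fun w =>
    continuous_const.dotProduct continuous_snd
  have htrans : ∀ x (s : M × (Fin d → ℝ)), s ∈ auxS ξ → s.1 ≠ x → fv x ⬝ᵥ s.2 ≠ 0 := by
    rintro x ⟨y, v⟩ ⟨_, hv, he⟩ hne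
    exact hAnosov.transverse y x hne v (fv x) hv (hfv x) he (Projectivization.mk_rep _).symm
  -- it suffices to find a functional on the compact set
  have hred : (∃ w : Fin d → ℝ, ∀ s ∈ auxS ξ, w ⬝ᵥ s.2 ≠ 0) →
      ∃ φ : (Fin d → ℝ) →ₗ[ℝ] ℝ, φ ≠ 0 ∧
      ∀ (x : M) (v : Fin d → ℝ) (hv : v ≠ 0), ξ x = Projectivization.mk ℝ v hv → φ v ≠ 0 := by
    rintro ⟨w, hw⟩
    have hmain : ∀ (x : M) (v : Fin d → ℝ) (hv : v ≠ 0), ξ x = Projectivization.mk ℝ v hv →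
        w ⬝ᵥ v ≠ 0 := by
      intro x v hv h h0
      obtain ⟨t, ht⟩ := auxS_exists ξ hv h
      apply hw _ ht
      simp [dotProduct_smul, h0]
    refine ⟨dotProductBilin ℝ ℝ w, ?_, fun x v hv h => hmain x v hv h⟩
    intro h0
    obtain ⟨x⟩ := hconn.toNonempty
    apply hmain x _ (ξ x).rep_nonzero (Projectivization.mk_rep _).symm
    exact LinearMap.congr_fun h0 _
  have hnonempty : ∀ x, ∃ v, (x, v) ∈ auxS ξ := fun x => by
    obtain ⟨t, ht⟩ := auxS_exists ξ (ξ x).rep_nonzero (Projectivization.mk_rep _).symm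
    exact ⟨_, ht⟩
  by_cases hzero : ∀ s ∈ auxS ξ, fv s.1 ⬝ᵥ s.2 = 0
  swap
  · push Not at hzero
    obtain ⟨⟨x, v⟩, hs, hne⟩ := hzero
    apply hred
    refine ⟨fv x, ?_⟩
    rintro ⟨y, w⟩ hw
    by_cases hyx : y = x
    · subst hyx
      rcases auxS_fiber ξ hw hs with h | h
      · rw [h]; exact hne
      · rw [h]; simpa using hne
    · exact htrans x (y, w) hw hyx
  by_cases hside : ∃ s ∈ auxS ξ, s ∉ closure {t | t ∈ auxS ξ ∧ 0 < fv s.1 ⬝ᵥ t.2}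
  · obtain ⟨⟨x, v⟩, hs, hncl⟩ := hside
    dsimp only at hncl
    apply hred
    have hKsub : closure {t | t ∈ auxS ξ ∧ 0 < fv x ⬝ᵥ t.2} ⊆
        {t | t ∈ auxS ξ ∧ 0 ≤ fv x ⬝ᵥ t.2} := by
      refine closure_minimal (fun t ht => ⟨ht.1, ht.2.le⟩) ?_
      exact hS.isClosed.inter (isClosed_le continuous_const (hfcont _))
    have hK : IsCompact (closure {t | t ∈ auxS ξ ∧ 0 < fv x ⬝ᵥ t.2}) :=
      hS.of_isClosed_subset isClosed_closure fun t ht => (hKsub ht).1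
    obtain ⟨ε, hε, hpos⟩ := aux_perturb hK (fun t => fv x ⬝ᵥ t.2) (fun t => (-v) ⬝ᵥ t.2)
      (hfcont _) (hfcont _) (fun t ht => (hKsub ht).2) (by
        rintro ⟨y, w⟩ ht h0
        have hyx : y = x := by
          by_contra h
          exact htrans x (y, w) (hKsub ht).1 h h0
        subst hyx
        rcases auxS_fiber ξ (hKsub ht).1 hs with h | h
        · rw [h] at ht
          exact absurd ht hncl
        · have := hs.1
          simp only [h]
          simpa using this.symm ▸ one_pos)
    have hval : ∀ t : Fin d → ℝ, (fv x + ε • (-v)) ⬝ᵥ t = fv x ⬝ᵥ t + ε * ((-v) ⬝ᵥ t) := by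
      intro t
      rw [add_dotProduct, smul_dotProduct, smul_eq_mul]
    refine ⟨fv x + ε • (-v), ?_⟩
    rintro ⟨y, w⟩ hw
    rw [hval]
    by_cases hyx : y = x
    · subst hyx
      have h0 : fv y ⬝ᵥ w = 0 := hzero _ hw
      have hv1 : v ⬝ᵥ v = 1 := hs.1
      dsimp only
      rw [h0]
      rcases auxS_fiber ξ hw hs with h | h
      · rw [h, neg_dotProduct, hv1]; simpa using hε.ne'
      · rw [h, neg_dotProduct, dotProduct_neg, hv1]; simpa using hε.ne'
    · have hne := htrans x (y, w) hw hyx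
      rcases lt_or_gt_of_ne hne with h | h
      · have h1 := hpos (y, -w) (subset_closure ⟨auxS_neg ξ hw, by simpa using h⟩)
        simp only [dotProduct_neg] at h1
        intro h2
        dsimp only at h2
        linarith
      · exact (hpos (y, w) (subset_closure ⟨hw, h⟩)).ne'
  · exfalso
    push Not at hside
    obtain ⟨x₀⟩ := hconn.toNonempty
    obtain ⟨v₀, hv₀⟩ := hnonempty x₀
    have hv₀' := auxS_neg ξ hv₀
    have hz0 : fv x₀ ⬝ᵥ v₀ = 0 := hzero _ hv₀
    let X : Set (M × (Fin d → ℝ)) := {t | t ∈ auxS ξ ∧ 0 ≤ fv x₀ ⬝ᵥ t.2}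
    have hXc : IsCompact X := hS.inter_right (isClosed_le continuous_const (hfcont _))
    have hXcs : CompactSpace X := isCompact_iff_compactSpace.1 hXc
    let _ : MetricSpace X := TopologicalSpace.metrizableSpaceMetric X
    have hv₀ne : v₀ ≠ -v₀ := by
      intro h
      have h1 : v₀ ⬝ᵥ v₀ = 1 := hv₀.1
      have h2 : v₀ ⬝ᵥ v₀ = v₀ ⬝ᵥ (-v₀) := by rw [← h]
      rw [dotProduct_neg] at h2
      linarith
    let p : X := ⟨(x₀, v₀), hv₀, by simp [hz0]⟩
    let q : X := ⟨(x₀, -v₀), hv₀', by simp [hz0]⟩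
    have hover : ∀ y : X, y.1.1 = x₀ → y = p ∨ y = q := by
      rintro ⟨⟨y, w⟩, hy, hy'⟩ h
      dsimp only at h
      subst h
      rcases auxS_fiber ξ hy hv₀ with h | h
      · left; exact Subtype.ext (Prod.ext rfl h)
      · right; exact Subtype.ext (Prod.ext rfl h)
    have hposX : ∀ y : X, y ≠ p → y ≠ q → y.1.1 ≠ x₀ ∧ 0 < fv x₀ ⬝ᵥ y.1.2 := by
      intro y hyp hyq
      have h1 : y.1.1 ≠ x₀ := fun h => (hover y h).elim hyp hyq
      exact ⟨h1, lt_of_le_of_ne y.2.2 (htrans x₀ y.1 y.2.1 h1).symm⟩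
    have hsame : ∀ y z : X, y ≠ p → y ≠ q → z.1.1 = y.1.1 → z = y := by
      intro y z hyp hyq h
      obtain ⟨h1, h2⟩ := hposX y hyp hyq
      obtain ⟨⟨y, w⟩, hy, hy'⟩ := y
      obtain ⟨⟨z, w'⟩, hz, hz'⟩ := z
      dsimp only at h h1 h2 hz'
      subst h
      rcases auxS_fiber ξ hz hy with h | h
      · exact Subtype.ext (Prod.ext rfl h)
      · exfalso
        rw [h, dotProduct_neg] at hz'
        linarith
    have hfX : ∀ w : Fin d → ℝ, Continuous fun s : X => w ⬝ᵥ s.1.2 := fun w =>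
      (hfcont w).comp continuous_subtype_val
    have hfy : ∀ y : X, y ≠ p → y ≠ q → fv y.1.1 ⬝ᵥ v₀ ≠ 0 := fun y hyp hyq =>
      htrans y.1.1 (x₀, v₀) hv₀ (hposX y hyp hyq).1.symm
    have hres := aux_circle (X := X) (M := M) (fun s => s.1.1)
      (continuous_fst.comp continuous_subtype_val)
      (by
        intro x
        by_cases hx : x = x₀
        · exact ⟨p, hx.symm⟩
        obtain ⟨v, hv⟩ := hnonempty x
        rcases le_total 0 (fv x₀ ⬝ᵥ v) with h | h
        · exact ⟨⟨(x, v), hv, h⟩, rfl⟩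
        · exact ⟨⟨(x, -v), auxS_neg ξ hv, by simpa using h⟩, rfl⟩)
      p q (fun h => hv₀ne (congrArg (fun s : X => s.1.2) h)) rfl
      (by
        intro x y hxy
        by_cases hyp : y = p
        · rcases hover x (by rw [hxy, hyp]) with h | h
          · left; rw [h, hyp]
          · exact Or.inr (Or.inr ⟨h, hyp⟩)
        by_cases hyq : y = q
        · rcases hover x (by rw [hxy, hyq]) with h | h
          · exact Or.inr (Or.inl ⟨h, hyq⟩)
          · left; rw [h, hyq]
        exact Or.inl (hsame y x hyp hyq hxy))
      (fun y => {s : X | 0 < (fv y.1.1 ⬝ᵥ v₀) * (fv y.1.1 ⬝ᵥ s.1.2)})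
      (fun y => {s : X | (fv y.1.1 ⬝ᵥ v₀) * (fv y.1.1 ⬝ᵥ s.1.2) < 0})
      (fun y _ _ => isOpen_lt continuous_const (continuous_const.mul (hfX _)))
      (fun y _ _ => isOpen_lt (continuous_const.mul (hfX _)) continuous_const)
      (fun y _ _ => Set.disjoint_left.2 fun s h1 h2 => lt_asymm (Set.mem_ofPred.1 h1) (Set.mem_ofPred.1 h2))
      (by
        intro y hyp hyq
        ext s
        simp only [Set.mem_union, Set.mem_ofPred_eq, Set.mem_compl_iff, Set.mem_singleton_iff]
        constructor
        · rintro h rfl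
          have h0 : fv s.1.1 ⬝ᵥ s.1.2 = 0 := hzero _ s.2.1
          rw [h0, mul_zero] at h
          simp at h
        · intro hne
          have h1 : s.1.1 ≠ y.1.1 := fun h => hne (hsame y s hyp hyq h)
          exact (lt_or_gt_of_ne (mul_ne_zero (hfy y hyp hyq) (htrans _ s.1 s.2.1 h1))).symm)
      (fun y hyp hyq => mul_self_pos.2 (hfy y hyp hyq))
      (by
        intro y hyp hyq
        change (fv y.1.1 ⬝ᵥ v₀) * (fv y.1.1 ⬝ᵥ (-v₀)) < 0
        rw [dotProduct_neg]
        nlinarith [mul_self_pos.2 (hfy y hyp hyq)])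
      (by
        intro y hyp hyq W hW hyW
        obtain ⟨h1, h2⟩ := hposX y hyp hyq
        obtain ⟨W', hW', rfl⟩ := isOpen_induced_iff.1 hW
        have hO : IsOpen (W' ∩ {t : M × (Fin d → ℝ) | 0 < fv x₀ ⬝ᵥ t.2}) :=
          hW'.inter (isOpen_lt continuous_const (hfcont _))
        rcases lt_or_gt_of_ne (hfy y hyp hyq) with hlt | hgt
        · obtain ⟨t, ⟨htW, ht0⟩, htS, ht⟩ :=
            mem_closure_iff.1 (hside y.1 y.2.1) _ hO ⟨hyW, h2⟩
          exact ⟨⟨t, htS, le_of_lt ht0⟩, htW, mul_neg_of_neg_of_pos hlt ht⟩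
        · let neg : M × (Fin d → ℝ) → M × (Fin d → ℝ) := fun t => (t.1, -t.2)
          have hneg : Continuous neg := continuous_fst.prodMk continuous_snd.neg
          have hy2 : (y.1.1, -y.1.2) ∈ auxS ξ := auxS_neg ξ y.2.1
          obtain ⟨t, ⟨htW, ht0⟩, htS, ht⟩ :=
            mem_closure_iff.1 (hside _ hy2) _ (hO.preimage hneg)
              (by
                change (y.1.1, - -y.1.2) ∈ W' ∩ {t : M × (Fin d → ℝ) | 0 < fv x₀ ⬝ᵥ t.2}
                rw [neg_neg]
                exact ⟨hyW, h2⟩)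
          refine ⟨⟨neg t, auxS_neg ξ htS, le_of_lt ht0⟩, htW, ?_⟩
          change (fv y.1.1 ⬝ᵥ v₀) * (fv y.1.1 ⬝ᵥ (-t.2)) < 0
          rw [dotProduct_neg]
          exact mul_neg_of_pos_of_neg hgt (neg_neg_of_pos ht))
      (by
        intro W hW hpW
        obtain ⟨W', hW', rfl⟩ := isOpen_induced_iff.1 hW
        obtain ⟨t, htW, htS, ht⟩ := mem_closure_iff.1 (hside _ hv₀) _ hW' hpW
        refine ⟨⟨t, htS, le_of_lt ht⟩, htW, ?_⟩
        intro h
        have h3 : t = (x₀, v₀) := congrArg Subtype.val h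
        rw [h3] at ht
        exact absurd ht (by simp [hz0]))
    obtain ⟨e⟩ := hres
    exact hnotcircle.elim e
end

section
/- Let (Γ, M) be a boundary pair with M connected, and let ρ : Γ → PGL_d(ℝ) be a relatively 1-Anosov representation with limit maps ξ¹ : M → ℙ(ℝ^d) and ξ^{d−1} : M → ℙ((ℝ^d)*). Suppose ξ¹(M) is bounded in an affine chart: there is a nonzero linear functional φ : ℝ^d → ℝ with φ(v) ≠ 0 for every nonzero v spanning a point of ξ¹(M). Then ρ(Γ) preserves a properly convex domain in ℙ(ℝ^d): there exists a nonempty open convex cone C ⊆ ℝ^d with tC = C for all t > 0 and with C̄ ∩ (−C̄) = {0}, such that for every γ ∈ Γ and every g ∈ GL_d(ℝ) representing ρ(γ), either g·C = C or g·C = −C. -/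
open Filter Topology Matrix Pointwise

namespace RelAnosovAux

lemma isOpenMap_mk' {d : ℕ} :
    IsOpenMap (fun w : {w : Fin d → ℝ // w ≠ 0} => Projectivization.mk ℝ w.1 w.2) := by
  intro U hU
  have hq : IsOpen ((fun w : {w : Fin d → ℝ // w ≠ 0} => Projectivization.mk ℝ w.1 w.2) ⁻¹'
      ((fun w : {w : Fin d → ℝ // w ≠ 0} => Projectivization.mk ℝ w.1 w.2) '' U)) := by
    have : ((fun w : {w : Fin d → ℝ // w ≠ 0} => Projectivization.mk ℝ w.1 w.2) ⁻¹'
      ((fun w : {w : Fin d → ℝ // w ≠ 0} => Projectivization.mk ℝ w.1 w.2) '' U)) =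
      ⋃ t : ℝˣ, (fun w : {w : Fin d → ℝ // w ≠ 0} =>
        (⟨t • w.1, by rw [Ne, smul_eq_zero_iff_eq]; exact w.2⟩ :
          {w : Fin d → ℝ // w ≠ 0})) ⁻¹' U := by
      ext w
      simp only [Set.mem_preimage, Set.mem_image, Set.mem_iUnion]
      constructor
      · rintro ⟨u, hu, h⟩
        rw [Projectivization.mk_eq_mk_iff] at h
        obtain ⟨t, ht⟩ := h
        refine ⟨t, ?_⟩
        convert hu
      · rintro ⟨t, ht⟩
        refine ⟨_, ht, ?_⟩
        rw [Projectivization.mk_eq_mk_iff]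
        exact ⟨t, rfl⟩
    rw [this]
    refine isOpen_iUnion fun t => hU.preimage ?_
    refine Continuous.subtype_mk ?_ _
    exact continuous_subtype_val.const_smul t
  exact hq

lemma continuous_mk' {d : ℕ} :
    Continuous (fun w : {w : Fin d → ℝ // w ≠ 0} => Projectivization.mk ℝ w.1 w.2) :=
  continuous_quotient_mk'

/-- The section of projective space over the affine chart `f ≠ 0`. -/
noncomputable def sec {d : ℕ} (f : (Fin d → ℝ) →ₗ[ℝ] ℝ) :
    Projectivization ℝ (Fin d → ℝ) → (Fin d → ℝ) :=
  Projectivization.lift (fun w => (f w.1)⁻¹ • w.1) (by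
    rintro ⟨a, ha⟩ ⟨b, hb⟩ t h
    simp only at h
    subst h
    have ht : t ≠ 0 := by rintro rfl; simp at ha
    simp only [map_smul, smul_eq_mul, mul_inv, smul_smul]
    congr 1
    field_simp)

lemma sec_mk {d : ℕ} (f : (Fin d → ℝ) →ₗ[ℝ] ℝ) (w : Fin d → ℝ) (hw : w ≠ 0) :
    sec f (Projectivization.mk ℝ w hw) = (f w)⁻¹ • w := rfl

lemma continuousAt_sec {d : ℕ} (f : (Fin d → ℝ) →ₗ[ℝ] ℝ) (w : Fin d → ℝ) (hw : w ≠ 0)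
    (hf : f w ≠ 0) : ContinuousAt (sec f) (Projectivization.mk ℝ w hw) := by
  have h1 : 𝓝 (Projectivization.mk ℝ w hw) =
      map (fun w : {w : Fin d → ℝ // w ≠ 0} => Projectivization.mk ℝ w.1 w.2) (𝓝 ⟨w, hw⟩) :=
    (isOpenMap_mk'.map_nhds_eq (x := (⟨w, hw⟩ : {w : Fin d → ℝ // w ≠ 0}))
      continuous_mk'.continuousAt).symm
  unfold ContinuousAt
  rw [h1, tendsto_map'_iff]
  have hfc : Continuous f := f.continuous_of_finiteDimensional
  have : ContinuousAt (fun w : {w : Fin d → ℝ // w ≠ 0} => (f w.1)⁻¹ • w.1) ⟨w, hw⟩ := by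
    have h2 : ContinuousAt (fun w : {w : Fin d → ℝ // w ≠ 0} => f w.1) ⟨w, hw⟩ :=
      (hfc.comp continuous_subtype_val).continuousAt
    have h3 : ContinuousAt (fun w : {w : Fin d → ℝ // w ≠ 0} => w.1) ⟨w, hw⟩ :=
      continuous_subtype_val.continuousAt
    exact (h2.inv₀ hf).smul h3
  exact this

lemma limit_proportional {d : ℕ} (w : ℕ → Fin d → ℝ) (hw : ∀ n, w n ≠ 0)
    (w0 : Fin d → ℝ) (h0 : w0 ≠ 0)
    (h : Tendsto (fun n => Projectivization.mk ℝ (w n) (hw n)) atTop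
      (𝓝 (Projectivization.mk ℝ w0 h0)))
    (t : ℕ → ℝ) (w' : Fin d → ℝ) (ht : Tendsto (fun n => t n • w n) atTop (𝓝 w')) :
    ∃ c : ℝ, w' = c • w0 := by
  obtain ⟨f, hf⟩ : ∃ f : (Fin d → ℝ) →ₗ[ℝ] ℝ, f w0 ≠ 0 := by
    by_contra! hcon
    exact h0 ((Module.forall_dual_apply_eq_zero_iff ℝ w0).1 hcon)
  have hfc : Continuous f := f.continuous_of_finiteDimensional
  have h1 := (continuousAt_sec f w0 h0 hf).tendsto.comp h
  have h2 : Tendsto (fun n => (f (w n))⁻¹ • w n) atTop (𝓝 ((f w0)⁻¹ • w0)) := h1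
  have h3 : Tendsto (fun n => f ((f (w n))⁻¹ • w n)) atTop (𝓝 (f ((f w0)⁻¹ • w0))) :=
    (hfc.tendsto _).comp h2
  have h4 : f ((f w0)⁻¹ • w0) ≠ 0 := by simp [hf]
  have h5 : ∀ᶠ n in atTop, f (w n) ≠ 0 := by
    filter_upwards [h3.eventually_ne h4] with n hn h'
    simp [h'] at hn
  have h6 : Tendsto (fun n => f (t n • w n) • ((f (w n))⁻¹ • w n)) atTop
      (𝓝 (f w' • ((f w0)⁻¹ • w0))) := ((hfc.tendsto _).comp ht).smul h2
  have h7 : Tendsto (fun n => t n • w n) atTop (𝓝 (f w' • ((f w0)⁻¹ • w0))) := by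
    refine h6.congr' ?_
    filter_upwards [h5] with n hn
    rw [smul_smul, map_smul, smul_eq_mul, mul_assoc, mul_inv_cancel₀ hn, mul_one]
  exact ⟨f w' * (f w0)⁻¹, by rw [mul_smul]; exact tendsto_nhds_unique ht h7⟩

lemma inv_conv {Γ M : Type} [Group Γ] [TopologicalSpace M] [MulAction Γ M] [CompactSpace M]
    [T2Space M] (g : ℕ → Γ) (a b : M) (h : ConvLocUnif g a b) (z : M) (hz : z ≠ a) :
    Tendsto (fun n => (g n)⁻¹ • z) atTop (𝓝 b) := by
  rw [(nhds_basis_opens b).tendsto_right_iff]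
  rintro U ⟨hbU, hU⟩
  have h1 := h Uᶜ hU.isClosed_compl.isCompact (by simpa using hbU) {z}ᶜ
    (isOpen_compl_singleton.mem_nhds (by simpa using hz.symm))
  filter_upwards [h1] with n hn
  by_contra hc
  have := hn _ hc
  simp at this

lemma pt_conv {Γ M : Type} [Group Γ] [TopologicalSpace M] [MulAction Γ M]
    (g : ℕ → Γ) (a b : M) (h : ConvLocUnif g a b) (z : M) (hz : z ≠ b) :
    Tendsto (fun n => g n • z) atTop (𝓝 a) := by
  intro U hU
  have := h {z} isCompact_singleton (by simpa using hz.symm) U hU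
  exact this.mono fun n hn => hn z rfl

/-- A matrix as a continuous linear operator. -/
noncomputable def L {d : ℕ} (g : GL (Fin d) ℝ) : (Fin d → ℝ) →L[ℝ] (Fin d → ℝ) :=
  LinearMap.toContinuousLinearMap (Matrix.toLin' (g : Matrix (Fin d) (Fin d) ℝ))

lemma L_apply {d : ℕ} (g : GL (Fin d) ℝ) (u : Fin d → ℝ) :
    L g u = (g : Matrix (Fin d) (Fin d) ℝ) *ᵥ u := rfl

lemma L_mul {d : ℕ} (g h : GL (Fin d) ℝ) : L (g * h) = (L g).comp (L h) := by
  ext1 u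
  simp [L_apply, Matrix.mulVec_mulVec]

lemma L_one {d : ℕ} : L (1 : GL (Fin d) ℝ) = ContinuousLinearMap.id ℝ _ := by
  ext1 u
  simp [L_apply]

lemma L_inv_apply {d : ℕ} (g : GL (Fin d) ℝ) (u : Fin d → ℝ) : L g⁻¹ (L g u) = u := by
  have := L_mul g⁻¹ g
  rw [inv_mul_cancel, L_one] at this
  exact (congrArg (fun T => T u) this).symm

lemma L_apply_inv {d : ℕ} (g : GL (Fin d) ℝ) (u : Fin d → ℝ) : L g (L g⁻¹ u) = u := by
  simpa using L_inv_apply g⁻¹ u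

lemma L_ne {d : ℕ} (g : GL (Fin d) ℝ) {u : Fin d → ℝ} (hu : u ≠ 0) : L g u ≠ 0 := by
  intro h
  apply hu
  rw [← L_inv_apply g u, h, map_zero]

lemma L_neg {d : ℕ} (g : GL (Fin d) ℝ) : L (-g) = - L g := by
  ext1 u
  simp [L_apply, Matrix.neg_mulVec]

lemma dot_L {d : ℕ} (g : GL (Fin d) ℝ) (ψ u : Fin d → ℝ) :
    (ψ ᵥ* (g : Matrix (Fin d) (Fin d) ℝ)) ⬝ᵥ u = ψ ⬝ᵥ L g u := by
  rw [L_apply, Matrix.dotProduct_mulVec]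

lemma coe_neg_eq {d : ℕ} (g : GL (Fin d) ℝ) : ((-g : GL (Fin d) ℝ) : ProjGL d) = (g : ProjGL d) := by
  rw [eq_comm, QuotientGroup.eq]
  rw [Subgroup.mem_center_iff]
  intro h
  ext i j
  simp

lemma scalar_of_eq {d : ℕ} (g h : GL (Fin d) ℝ) (e : (g : ProjGL d) = (h : ProjGL d)) :
    ∃ c : ℝ, L h = c • L g := by
  rw [QuotientGroup.eq, Matrix.GeneralLinearGroup.mem_center_iff_val_mem_range_scalar] at e
  obtain ⟨c, hc⟩ := e
  refine ⟨c, ?_⟩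
  have h1 : L h = (L g).comp (L (g⁻¹ * h)) := by rw [← L_mul, mul_inv_cancel_left]
  have h2 : L (g⁻¹ * h) = c • ContinuousLinearMap.id ℝ _ := by
    ext1 u
    rw [L_apply, ← hc]
    simp
  rw [h1, h2]
  ext1 u
  simp

section core

variable {Γ M : Type} [Group Γ] [TopologicalSpace M] [MulAction Γ M]
    {d : ℕ} {ρ : Γ →* ProjGL d}
    {ξ ξs : M → Projectivization ℝ (Fin d → ℝ)}

lemma limit_pos [CompactSpace M] [T2Space M]
    (hA : IsRelOneAnosovPGL ρ ξ ξs)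
    (φ : (Fin d → ℝ) →ₗ[ℝ] ℝ) (v : M → Fin d → ℝ) (hv : ∀ x, v x ≠ 0)
    (hφv : ∀ x, φ (v x) = 1) (hξ : ∀ x, ξ x = Projectivization.mk ℝ (v x) (hv x))
    (x₁ x₂ : M) (hx : x₁ ≠ x₂)
    (γ : ℕ → Γ) (a b : M) (hconv : ConvLocUnif γ a b)
    (g : ℕ → GL (Fin d) ℝ) (hg : ∀ n, (g n : ProjGL d) = ρ (γ n))
    (hpos : ∀ n x, 0 < φ (L (g n) (v x)))
    (t : ℕ → ℝ) (ht : ∀ n, 0 ≤ t n)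
    (T : (Fin d → ℝ) →L[ℝ] (Fin d → ℝ)) (hT : T ≠ 0)
    (hlim : Tendsto (fun n => t n • L (g n)) atTop (𝓝 T)) :
    0 < φ (T (v x₁ + v x₂)) ∧ ∀ u, T u = φ (T u) • v a := by
  have hφc : Continuous φ := φ.continuous_of_finiteDimensional
  have hlimu : ∀ u, Tendsto (fun n => t n • L (g n) u) atTop (𝓝 (T u)) := fun u =>
    ((ContinuousLinearMap.apply ℝ (Fin d → ℝ) u).continuous.tendsto T).comp hlim
  -- representative of ξs b
  set ψb := (ξs b).rep with hψb
  have hψb0 : ψb ≠ 0 := Projectivization.rep_nonzero _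
  have hψbe : ξs b = Projectivization.mk ℝ ψb hψb0 := (Projectivization.mk_rep _).symm
  have hd1 : ∀ u, ψb ⬝ᵥ u ≠ 0 → ∃ c : ℝ, T u = c • v a := by
    intro u hu
    have hu0 : u ≠ 0 := by rintro rfl; simp at hu
    have := hA.dynamics γ a b (pt_conv γ a b hconv) (inv_conv γ a b hconv) g hg ψb hψb0 hψbe u
      (fun n => L_ne (g n) hu0) hu
    rw [hξ a] at this
    exact limit_proportional _ _ _ _ this t (T u) (hlimu u)
  have hd2 : ∀ u, ∃ c : ℝ, T u = c • v a := by
    intro u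
    by_cases hu : ψb ⬝ᵥ u = 0
    · have hb : ψb ⬝ᵥ ψb ≠ 0 := by simpa using hψb0
      obtain ⟨c, hc⟩ := hd1 ψb hb
      obtain ⟨c', hc'⟩ := hd1 (u + ψb) (by rw [dotProduct_add, hu, zero_add]; exact hb)
      refine ⟨c' - c, ?_⟩
      rw [sub_smul, ← hc, ← hc', map_add]; simp
    · exact hd1 u hu
  have hTa : ∀ u, T u = φ (T u) • v a := by
    intro u
    obtain ⟨c, hc⟩ := hd2 u
    rw [hc]; simp [hφv]
  refine ⟨?_, hTa⟩
  -- the functional φ ∘ T is a nonzero multiple of ψb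
  obtain ⟨z, hz⟩ : ∃ z : M, z ≠ a := by
    by_cases h : x₁ = a
    · exact ⟨x₂, fun h' => hx (h.trans h'.symm)⟩
    · exact ⟨x₁, h⟩
  set ψz := (ξs z).rep with hψz
  have hψz0 : ψz ≠ 0 := Projectivization.rep_nonzero _
  have hψze : ξs z = Projectivization.mk ℝ ψz hψz0 := (Projectivization.mk_rep _).symm
  have hza : ψz ⬝ᵥ v a ≠ 0 := hA.transverse a z hz.symm _ _ (hv a) hψz0 (hξ a) hψze
  have hne : ∀ n, ψz ᵥ* (g n : Matrix (Fin d) (Fin d) ℝ) ≠ 0 := by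
    intro n h0
    have : ψz ⬝ᵥ ψz = 0 := by
      have h1 := dot_L (g n) ψz (L (g n)⁻¹ ψz)
      rw [h0, L_apply_inv] at h1
      simpa using h1.symm
    exact hψz0 (by simpa using this)
  have heq : ∀ n, ξs ((γ n)⁻¹ • z) = Projectivization.mk ℝ _ (hne n) := by
    intro n
    have h1 : (((g n)⁻¹ : GL (Fin d) ℝ) : ProjGL d) = ρ (γ n)⁻¹ := by
      rw [map_inv, ← hg n]; rfl
    have := hA.equivariant_snd (γ n)⁻¹ (g n)⁻¹ h1 z ψz hψz0 (by rw [inv_inv]; exact hne n) hψze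
    simpa only [inv_inv] using this
  have hs : Tendsto (fun n => Projectivization.mk ℝ _ (hne n)) atTop
      (𝓝 (Projectivization.mk ℝ ψb hψb0)) := by
    rw [← hψbe]
    simp only [← heq]
    exact (hA.continuous_snd.tendsto b).comp (inv_conv γ a b hconv z hz)
  have hw' : Tendsto (fun n => t n • (ψz ᵥ* (g n : Matrix (Fin d) (Fin d) ℝ))) atTop
      (𝓝 (fun i => ψz ⬝ᵥ T (Pi.single i 1))) := by
    rw [tendsto_pi_nhds]
    intro i
    have h1 : ∀ n, (t n • (ψz ᵥ* (g n : Matrix (Fin d) (Fin d) ℝ))) i =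
        ψz ⬝ᵥ (t n • L (g n) (Pi.single i 1)) := by
      intro n
      rw [dotProduct_smul, ← dot_L]
      simp
    simp only [h1]
    exact ((Continuous.dotProduct continuous_const continuous_id).tendsto _).comp (hlimu _)
  obtain ⟨c, hc⟩ := limit_proportional _ _ _ _ hs t _ hw'
  have hcu : ∀ u, ψz ⬝ᵥ T u = c * (ψb ⬝ᵥ u) := by
    intro u
    have h1 : ψz ⬝ᵥ T u = (fun i => ψz ⬝ᵥ T (Pi.single i 1)) ⬝ᵥ u := by
      conv_lhs => rw [pi_eq_sum_univ' u]
      rw [map_sum, dotProduct_sum]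
      simp only [dotProduct, map_smul]
      refine Finset.sum_congr rfl fun i _ => ?_
      simp only [Pi.smul_apply, smul_eq_mul, Finset.sum_mul]
      refine Finset.sum_congr rfl fun j _ => ?_
      ring
    rw [h1, hc, smul_dotProduct, smul_eq_mul]
  have hc0 : c ≠ 0 := by
    rintro rfl
    apply hT
    ext1 u
    have h1 := hcu u
    rw [hTa u, dotProduct_smul, smul_eq_mul, zero_mul] at h1
    have h2 : φ (T u) = 0 := (mul_eq_zero.1 h1).resolve_right hza
    rw [hTa u, h2]; simp
  have hnn : ∀ x, 0 ≤ φ (T (v x)) := by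
    intro x
    refine ge_of_tendsto' ((hφc.tendsto _).comp (hlimu (v x))) fun n => ?_
    simp only [Function.comp, map_smul, smul_eq_mul]
    exact mul_nonneg (ht n) (hpos n x).le
  have hp : ∀ x, x ≠ b → 0 < φ (T (v x)) := by
    intro x hxb
    refine lt_of_le_of_ne (hnn x) fun h0 => ?_
    have h1 := hcu (v x)
    rw [hTa (v x), ← h0, zero_smul, dotProduct_zero] at h1
    exact mul_ne_zero hc0 (hA.transverse x b hxb _ _ (hv x) hψb0 (hξ x) hψbe) h1.symm
  rw [map_add, map_add]
  by_cases h : x₁ = b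
  · have := hp x₂ (fun h' => hx (h.trans h'.symm))
    linarith [hnn x₁]
  · linarith [hp x₁ h, hnn x₂]

lemma bound [CompactSpace M] [T2Space M]
    (hC : IsConvergenceAction Γ M)
    (hA : IsRelOneAnosovPGL ρ ξ ξs)
    (φ : (Fin d → ℝ) →ₗ[ℝ] ℝ) (v : M → Fin d → ℝ) (hv : ∀ x, v x ≠ 0)
    (hφv : ∀ x, φ (v x) = 1) (hξ : ∀ x, ξ x = Projectivization.mk ℝ (v x) (hv x))
    (heq : ∀ (γ : Γ) (g : GL (Fin d) ℝ), (g : ProjGL d) = ρ γ →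
      ∀ x, L g (v x) = φ (L g (v x)) • v (γ • x))
    (x₁ x₂ : M) (hx : x₁ ≠ x₂)
    (f : (Fin d → ℝ) →ₗ[ℝ] ℝ) (hf : ∀ x, 0 < f (v x)) :
    ∃ ε > 0, ∀ (g : GL (Fin d) ℝ) (γ : Γ), (g : ProjGL d) = ρ γ →
      (∀ x, 0 < φ (L g (v x))) → ε * ‖L g‖ ≤ f (L g (v x₁ + v x₂)) := by
  have hfc : Continuous f := f.continuous_of_finiteDimensional
  by_contra! hcon
  choose g γ hg hpos hlt using fun n : ℕ => hcon (1 / ((n : ℝ) + 1)) (by positivity)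
  have hgn : ∀ n, 0 < ‖L (g n)‖ := by
    intro n
    rw [norm_pos_iff]
    intro h0
    exact L_ne (g n) (hv x₁) (by rw [h0]; rfl)
  have hfpos : ∀ n, 0 < f (L (g n) (v x₁ + v x₂)) := by
    intro n
    rw [map_add, map_add, heq (γ n) (g n) (hg n) x₁, heq (γ n) (g n) (hg n) x₂]
    simp only [map_smul, smul_eq_mul]
    have := mul_pos (hpos n x₁) (hf (γ n • x₁))
    have := mul_pos (hpos n x₂) (hf (γ n • x₂))
    linarith
  -- normalised values tend to zero
  have hzero : Tendsto (fun n => ‖L (g n)‖⁻¹ * f (L (g n) (v x₁ + v x₂))) atTop (𝓝 0) := by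
    refine squeeze_zero (fun n => (mul_pos (inv_pos.2 (hgn n)) (hfpos n)).le) (fun n => ?_)
      tendsto_one_div_add_atTop_nhds_zero_nat
    rw [inv_mul_le_iff₀ (hgn n), mul_comm]
    exact (hlt n).le
  obtain ⟨s, hs | hs⟩ := exists_increasing_or_nonincreasing_subseq (fun a b : Γ => a = b) γ
  · -- constant subsequence
    have hz2 := hzero.comp (s.strictMono.tendsto_atTop)
    have hconst : ∀ n, ‖L (g (s n))‖⁻¹ * f (L (g (s n)) (v x₁ + v x₂)) =
        ‖L (g (s 0))‖⁻¹ * f (L (g (s 0)) (v x₁ + v x₂)) := by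
      intro n
      have hγ : γ (s 0) = γ (s n) := by
        rcases Nat.eq_zero_or_pos n with rfl | hn
        · rfl
        · exact hs 0 n hn
      obtain ⟨c, hc⟩ := scalar_of_eq (g (s 0)) (g (s n)) (by rw [hg, hg, hγ])
      have hfn := hfpos (s n)
      have hf0 := hfpos (s 0)
      have hcpos : 0 < c := by
        rw [hc] at hfn
        simp only [_root_.smul_apply, map_smul f, smul_eq_mul] at hfn
        exact pos_of_mul_pos_left hfn hf0.le
      rw [hc, norm_smul, Real.norm_of_nonneg hcpos.le]
      simp only [_root_.smul_apply, map_smul f, smul_eq_mul]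
      have := (hgn (s 0)).ne'
      field_simp
    have hz3 : Tendsto (fun _ : ℕ => ‖L (g (s 0))‖⁻¹ * f (L (g (s 0)) (v x₁ + v x₂))) atTop
        (𝓝 0) := by
      refine hz2.congr fun n => ?_
      exact hconst n
    have := tendsto_nhds_unique hz3 tendsto_const_nhds
    exact (mul_pos (inv_pos.2 (hgn (s 0))) (hfpos (s 0))).ne this
  · have hinj : Function.Injective (fun n => γ (s n)) := by
      intro m n hmn
      rcases lt_trichotomy m n with h | h | h
      · exact absurd hmn (hs m n h)
      · exact h
      · exact absurd hmn.symm (hs n m h)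
    obtain ⟨k, hk, a, b, hconv⟩ := hC.2 _ hinj
    -- extract a limit of the normalised operators
    have hmem : ∀ n, ‖L (g (s (k n)))‖⁻¹ • L (g (s (k n))) ∈
        Metric.sphere (0 : (Fin d → ℝ) →L[ℝ] (Fin d → ℝ)) 1 := by
      intro n
      rw [mem_sphere_zero_iff_norm, norm_smul, norm_inv, norm_norm,
        inv_mul_cancel₀ (hgn _).ne']
    obtain ⟨T, hTm, l, hl, hlim⟩ := (isCompact_sphere _ _).tendsto_subseq hmem
    have hT : T ≠ 0 := by
      rintro rfl
      simp at hTm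
    have hconv' : ConvLocUnif (fun n => γ (s (k (l n)))) a b := by
      intro K hK hb U hU
      exact hl.tendsto_atTop.eventually (hconv K hK hb U hU)
    obtain ⟨h1, h2⟩ := limit_pos hA φ v hv hφv hξ x₁ x₂ hx _ a b hconv'
      (fun n => g (s (k (l n)))) (fun n => hg _) (fun n => hpos _)
      (fun n => ‖L (g (s (k (l n))))‖⁻¹) (fun n => by positivity) T hT hlim
    have h3 : 0 < f (T (v x₁ + v x₂)) := by
      rw [h2, map_smul, smul_eq_mul]
      exact mul_pos h1 (hf a)
    have hlimu : Tendsto (fun n => f (‖L (g (s (k (l n))))‖⁻¹ •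
        L (g (s (k (l n)))) (v x₁ + v x₂))) atTop (𝓝 (f (T (v x₁ + v x₂)))) :=
      (hfc.tendsto _).comp
        (((ContinuousLinearMap.apply ℝ (Fin d → ℝ) (v x₁ + v x₂)).continuous.tendsto T).comp hlim)
    have hz2 := hzero.comp (s.strictMono.tendsto_atTop.comp (hk.tendsto_atTop.comp hl.tendsto_atTop))
    have hz3 := hlimu.congr (f₂ := (fun n => ‖L (g n)‖⁻¹ * f (L (g n) (v x₁ + v x₂))) ∘
      (s ∘ (k ∘ l))) (fun n => by simp [mul_add])
    exact h3.ne' (tendsto_nhds_unique hz3 hz2)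

end core

lemma cone_exists {d : ℕ} (P : Set (GL (Fin d) ℝ)) (h1 : 1 ∈ P)
    (hmul : ∀ g ∈ P, ∀ h ∈ P, g * h ∈ P) (hinv : ∀ g ∈ P, g⁻¹ ∈ P)
    {ι : Type} [Finite ι] (F : ι → (Fin d → ℝ) →ₗ[ℝ] ℝ)
    (hsep : ∀ u, (∀ i, F i u = 0) → u = 0) (hd : Nontrivial (Fin d → ℝ))
    (p : Fin d → ℝ) (hp : ∀ i, ∃ ε > 0, ∀ g ∈ P, ε * ‖L g‖ ≤ F i (L g p)) :
    ∃ C : Set (Fin d → ℝ), C.Nonempty ∧ IsOpen C ∧ Convex ℝ C ∧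
      (∀ t : ℝ, 0 < t → t • C = C) ∧
      (closure C ∩ (-closure C) = {0}) ∧
      ∀ g ∈ P, (fun v => L g v) '' C = C := by
  have hFc : ∀ i, Continuous (F i) := fun i => (F i).continuous_of_finiteDimensional
  have hLpos : ∀ g : GL (Fin d) ℝ, 0 < ‖L g‖ := by
    intro g
    obtain ⟨w, hw⟩ := exists_ne (0 : Fin d → ℝ)
    rw [norm_pos_iff]
    intro h0
    exact L_ne g hw (by rw [h0]; rfl)
  set C : Set (Fin d → ℝ) := {u | ∃ ε > 0, ∀ i, ∀ g ∈ P, ε * ‖L g‖ ≤ F i (L g u)} with hC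
  have hsmul : ∀ t : ℝ, 0 < t → ∀ u ∈ C, t • u ∈ C := by
    rintro t ht u ⟨ε, hε, h⟩
    refine ⟨t * ε, by positivity, fun i g hg => ?_⟩
    rw [map_smul, map_smul, smul_eq_mul, mul_assoc]
    exact mul_le_mul_of_nonneg_left (h i g hg) ht.le
  have hstab : ∀ h ∈ P, ∀ u ∈ C, L h u ∈ C := by
    rintro h hh u ⟨ε, hε, H⟩
    refine ⟨ε / ‖L h⁻¹‖, div_pos hε (hLpos _), fun i g hg => ?_⟩
    have e1 := H i (g * h) (hmul g hg h hh)
    rw [L_mul] at e1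
    refine le_trans ?_ e1
    have e2 : ‖L g‖ ≤ ‖(L g).comp (L h)‖ * ‖L h⁻¹‖ := by
      have : L g = ((L g).comp (L h)).comp (L h⁻¹) := by
        ext1 u
        simp [L_apply_inv]
      conv_lhs => rw [this]
      exact ContinuousLinearMap.opNorm_comp_le _ _
    rw [div_mul_eq_mul_div, div_le_iff₀ (hLpos _), mul_assoc]
    exact mul_le_mul_of_nonneg_left e2 hε.le
  have hpC : p ∈ C := by
    choose ε hε H using hp
    obtain ⟨e, he, hle⟩ : ∃ e > 0, ∀ i, e ≤ ε i := by
      rcases isEmpty_or_nonempty ι with hι | hι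
      · exact ⟨1, one_pos, fun i => isEmptyElim i⟩
      · obtain ⟨i0, hi0⟩ := Finite.exists_min ε
        exact ⟨ε i0, hε i0, hi0⟩
    exact ⟨e, he, fun i g hg => le_trans
      (mul_le_mul_of_nonneg_right (hle i) (norm_nonneg _)) (H i g hg)⟩
  have hcl : ∀ u ∈ closure C, ∀ i, 0 ≤ F i u := by
    intro u hu i
    have hsub : C ⊆ {u | 0 ≤ F i u} := by
      rintro w ⟨ε, hε, H⟩
      have := H i 1 h1
      rw [L_one] at this
      refine le_trans ?_ this
      positivity
    exact closure_minimal hsub (isClosed_le continuous_const (hFc i)) hu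
  have h0 : (0 : Fin d → ℝ) ∈ closure C := by
    have ht : Tendsto (fun n : ℕ => (1 / ((n : ℝ) + 1)) • p) atTop (𝓝 ((0 : ℝ) • p)) :=
      tendsto_one_div_add_atTop_nhds_zero_nat.smul_const p
    rw [zero_smul] at ht
    exact mem_closure_of_tendsto ht (Eventually.of_forall fun n =>
      hsmul _ (by positivity) p hpC)
  refine ⟨C, ⟨p, hpC⟩, ?_, ?_, ?_, ?_, ?_⟩
  · rw [Metric.isOpen_iff]
    rintro u ⟨ε, hε, H⟩
    have hFb : ∃ B > 0, ∀ i w, |F i w| ≤ B * ‖w‖ := by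
      let G : ι → ((Fin d → ℝ) →L[ℝ] ℝ) := fun i => LinearMap.toContinuousLinearMap (F i)
      rcases isEmpty_or_nonempty ι with hι | hι
      · exact ⟨1, one_pos, fun i => isEmptyElim i⟩
      · obtain ⟨i0, hi0⟩ := Finite.exists_max (fun i => ‖G i‖)
        refine ⟨‖G i0‖ + 1, by positivity, fun i w => ?_⟩
        have := (G i).le_opNorm w
        refine le_trans this (mul_le_mul_of_nonneg_right ?_ (norm_nonneg _))
        linarith [hi0 i]
    obtain ⟨B, hB, hFB⟩ := hFb
    refine ⟨ε / (2 * B), by positivity, fun w hw => ⟨ε / 2, by positivity, fun i g hg => ?_⟩⟩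
    rw [Metric.mem_ball, dist_eq_norm] at hw
    have e1 := H i g hg
    have e2 : L g w = L g u + L g (w - u) := by simp
    have e3 := hFB i (L g (w - u))
    have e4 := (L g).le_opNorm (w - u)
    have e5 : B * ‖L g (w - u)‖ ≤ ε / 2 * ‖L g‖ := by
      calc B * ‖L g (w - u)‖ ≤ B * (‖L g‖ * (ε / (2 * B))) := by gcongr; exact e4.trans (by gcongr)
        _ = ε / 2 * ‖L g‖ := by field_simp
    rw [e2, map_add]
    have := neg_abs_le (F i (L g (w - u)))
    linarith
  · rintro u ⟨ε, hε, H⟩ w ⟨ε', hε', H'⟩ s t hs ht hst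
    refine ⟨min ε ε', lt_min hε hε', fun i g hg => ?_⟩
    simp only [map_add, map_smul, smul_eq_mul]
    have e1 : min ε ε' * ‖L g‖ ≤ F i (L g u) :=
      le_trans (mul_le_mul_of_nonneg_right (min_le_left _ _) (norm_nonneg _)) (H i g hg)
    have e2 : min ε ε' * ‖L g‖ ≤ F i (L g w) :=
      le_trans (mul_le_mul_of_nonneg_right (min_le_right _ _) (norm_nonneg _)) (H' i g hg)
    calc min ε ε' * ‖L g‖ = s * (min ε ε' * ‖L g‖) + t * (min ε ε' * ‖L g‖) := by
          rw [← add_mul, hst, one_mul]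
      _ ≤ _ := add_le_add (mul_le_mul_of_nonneg_left e1 hs) (mul_le_mul_of_nonneg_left e2 ht)
  · intro t ht
    ext u
    rw [Set.mem_smul_set_iff_inv_smul_mem₀ ht.ne']
    refine ⟨fun h => ?_, fun h => hsmul _ (inv_pos.2 ht) u h⟩
    have := hsmul t ht _ h
    rwa [smul_inv_smul₀ ht.ne'] at this
  · ext u
    simp only [Set.mem_inter_iff, Set.mem_neg, Set.mem_singleton_iff]
    constructor
    · rintro ⟨hu, hu'⟩
      refine hsep u fun i => le_antisymm ?_ (hcl u hu i)
      have := hcl _ hu' i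
      rw [map_neg] at this
      linarith
    · rintro rfl
      exact ⟨h0, by simpa using h0⟩
  · intro g hg
    ext u
    constructor
    · rintro ⟨w, hw, rfl⟩
      exact hstab g hg w hw
    · intro hu
      exact ⟨L g⁻¹ u, hstab _ (hinv g hg) u hu, L_apply_inv g u⟩

end RelAnosovAux

open RelAnosovAux in
/-- **Proposition (preserving a properly convex domain).**
If `(Γ, M)` is a boundary pair with `M` connected, `ρ : Γ → PGL_d(ℝ)` is relatively 1-Anosov
with limit maps `ξ, ξs`, and `ξ(M)` is bounded in an affine chart, then `ρ(Γ)` preserves a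
properly convex domain in `ℙ(ℝ^d)`, i.e. there is a properly convex open cone `C ⊆ ℝ^d` such
that every lift to `GL_d(ℝ)` of every `ρ(γ)` carries `C` to `C` or to `-C`. -/
theorem rel_anosov_preserves_properly_convex_domain
    {Γ M : Type} [Group Γ] [TopologicalSpace M] [MulAction Γ M]
    (hBP : IsBoundaryPair Γ M)
    (hconn : ConnectedSpace M)
    {d : ℕ} (ρ : Γ →* ProjGL d)
    (ξ ξs : M → Projectivization ℝ (Fin d → ℝ))
    (hAnosov : IsRelOneAnosovPGL ρ ξ ξs)
    (φ : (Fin d → ℝ) →ₗ[ℝ] ℝ) (hφ : φ ≠ 0)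
    (hbounded : ∀ (x : M) (v : Fin d → ℝ) (hv : v ≠ 0),
      ξ x = Projectivization.mk ℝ v hv → φ v ≠ 0) :
    ∃ C : Set (Fin d → ℝ), C.Nonempty ∧ IsOpen C ∧ Convex ℝ C ∧
      (∀ t : ℝ, 0 < t → t • C = C) ∧
      (closure C ∩ (-closure C) = {0}) ∧
      ∀ (γ : Γ) (g : GL (Fin d) ℝ), (g : ProjGL d) = ρ γ →
        ((fun v => (g : Matrix (Fin d) (Fin d) ℝ) *ᵥ v) '' C = C ∨
         (fun v => (g : Matrix (Fin d) (Fin d) ℝ) *ᵥ v) '' C = -C) := by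
  have := hBP.compact
  have := hBP.metrizable
  obtain ⟨x₁⟩ := hconn.toNonempty
  obtain ⟨x₂, hx⟩ : ∃ x₂ : M, x₁ ≠ x₂ := by
    have := hBP.perfect x₁
    obtain ⟨y, hy⟩ := (eventually_mem_nhdsWithin (a := x₁) (s := {x₁}ᶜ)).exists
    exact ⟨y, fun h => hy h.symm⟩
  have hφr : ∀ x, φ (ξ x).rep ≠ 0 := fun x =>
    hbounded x _ (Projectivization.rep_nonzero _) (Projectivization.mk_rep _).symm
  set v : M → Fin d → ℝ := fun x => sec φ (ξ x) with hvdef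
  have hvrep : ∀ x, v x = (φ (ξ x).rep)⁻¹ • (ξ x).rep := by
    intro x
    rw [← sec_mk φ _ (Projectivization.rep_nonzero _), Projectivization.mk_rep]
  have hφv : ∀ x, φ (v x) = 1 := by
    intro x
    rw [hvrep, map_smul, smul_eq_mul, inv_mul_cancel₀ (hφr x)]
  have hv : ∀ x, v x ≠ 0 := by
    intro x h0
    have := hφv x
    rw [h0, map_zero] at this
    exact zero_ne_one this
  have hξ : ∀ x, ξ x = Projectivization.mk ℝ (v x) (hv x) := by
    intro x
    conv_lhs => rw [← Projectivization.mk_rep (ξ x)]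
    rw [Projectivization.mk_eq_mk_iff']
    refine ⟨φ (ξ x).rep, ?_⟩
    rw [hvrep, smul_inv_smul₀ (hφr x)]
  have hvc : Continuous v := by
    rw [continuous_iff_continuousAt]
    intro x
    have h1 : ContinuousAt (sec φ) (ξ x) := by
      rw [hξ x]
      exact continuousAt_sec φ _ _ (by rw [hφv]; exact one_ne_zero)
    exact h1.comp hAnosov.continuous_fst.continuousAt
  have hφc : Continuous φ := φ.continuous_of_finiteDimensional
  have heq : ∀ (γ : Γ) (g : GL (Fin d) ℝ), (g : ProjGL d) = ρ γ →
      ∀ x, L g (v x) = φ (L g (v x)) • v (γ • x) := by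
    intro γ g hg x
    have h1 := hAnosov.equivariant_fst γ g hg x (v x) (hv x)
      (by rw [← RelAnosovAux.L_apply]; exact L_ne g (hv x)) (hξ x)
    rw [hξ, eq_comm, Projectivization.mk_eq_mk_iff'] at h1
    obtain ⟨c, hc⟩ := h1
    rw [← RelAnosovAux.L_apply] at hc
    rw [← hc, map_smul, hφv, smul_eq_mul, mul_one]
  have hne : ∀ (γ : Γ) (g : GL (Fin d) ℝ), (g : ProjGL d) = ρ γ → ∀ x, φ (L g (v x)) ≠ 0 := by
    intro γ g hg x h0
    have h1 := heq γ g hg x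
    rw [h0, zero_smul] at h1
    exact L_ne g (hv x) h1
  set P : Set (GL (Fin d) ℝ) :=
    {g | ∃ γ : Γ, (g : ProjGL d) = ρ γ ∧ ∀ x, 0 < φ (L g (v x))} with hP
  have hsign : ∀ (γ : Γ) (g : GL (Fin d) ℝ), (g : ProjGL d) = ρ γ → g ∈ P ∨ -g ∈ P := by
    intro γ g hg
    have hcont : Continuous fun x => φ (L g (v x)) := hφc.comp ((L g).continuous.comp hvc)
    rcases lt_or_gt_of_ne (hne γ g hg x₁) with h | h
    · right
      refine ⟨γ, by rw [coe_neg_eq, hg], fun x => ?_⟩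
      rw [L_neg, _root_.neg_apply, map_neg, neg_pos]
      by_contra! hx'
      obtain ⟨y, hy⟩ := mem_range_of_exists_le_of_exists_ge hcont ⟨x₁, h.le⟩ ⟨x, hx'⟩
      exact hne γ g hg y hy
    · left
      refine ⟨γ, hg, fun x => ?_⟩
      by_contra! hx'
      obtain ⟨y, hy⟩ := mem_range_of_exists_le_of_exists_ge hcont ⟨x, hx'⟩ ⟨x₁, h.le⟩
      exact hne γ g hg y hy
  have h1P : (1 : GL (Fin d) ℝ) ∈ P := by
    refine ⟨1, by rw [map_one]; rfl, fun x => ?_⟩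
    rw [L_one, ContinuousLinearMap.id_apply, hφv]
    exact one_pos
  have hmul : ∀ g ∈ P, ∀ h ∈ P, g * h ∈ P := by
    rintro g ⟨γ, hg, hgp⟩ h ⟨η, hh, hhp⟩
    refine ⟨γ * η, by rw [map_mul, ← hg, ← hh]; rfl, fun x => ?_⟩
    rw [RelAnosovAux.L_mul, ContinuousLinearMap.comp_apply, heq η h hh x, map_smul, map_smul, smul_eq_mul]
    exact mul_pos (hhp x) (hgp _)
  have hinv : ∀ g ∈ P, g⁻¹ ∈ P := by
    rintro g ⟨γ, hg, hgp⟩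
    refine ⟨γ⁻¹, by rw [map_inv, ← hg]; rfl, fun x => ?_⟩
    have h1 := heq γ g hg (γ⁻¹ • x)
    rw [smul_inv_smul] at h1
    have h2 := hgp (γ⁻¹ • x)
    set c := φ (L g (v (γ⁻¹ • x)))
    have h3 : v (γ⁻¹ • x) = c • L g⁻¹ (v x) := by
      rw [← map_smul, ← h1, L_inv_apply]
    have h4 := hφv (γ⁻¹ • x)
    rw [h3, map_smul, smul_eq_mul] at h4
    by_contra! h5
    nlinarith
  -- functionals close to φ
  obtain ⟨B, hB⟩ := (isCompact_range hvc).isBounded.exists_norm_le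
  have hB' : ∀ x, ‖v x‖ ≤ B := fun x => hB _ ⟨x, rfl⟩
  have hB0 : 0 ≤ B := (norm_nonneg _).trans (hB' x₁)
  set δ : ℝ := 1 / (B + 1) with hδ
  have hδ0 : 0 < δ := by positivity
  let F : Option (Fin d) → (Fin d → ℝ) →ₗ[ℝ] ℝ := fun o =>
    o.elim φ (fun i => φ + δ • LinearMap.proj i)
  have hF : ∀ o x, 0 < F o (v x) := by
    intro o x
    cases o with
    | none => change 0 < φ (v x); rw [hφv]; exact one_pos
    | some i =>
      change 0 < φ (v x) + δ * v x i
      rw [hφv]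
      have e1 : |v x i| ≤ B := (norm_le_pi_norm (v x) i).trans (hB' x)
      have e2 : δ * B < 1 := by
        rw [hδ, one_div, inv_mul_lt_iff₀ (by positivity)]; linarith
      have e3 := neg_abs_le (v x i)
      nlinarith
  have hsep : ∀ u, (∀ o, F o u = 0) → u = 0 := by
    intro u hu
    have h0 : φ u = 0 := hu none
    ext i
    have h1 : φ u + δ * u i = 0 := hu (some i)
    rw [h0, zero_add] at h1
    exact (mul_eq_zero.1 h1).resolve_left hδ0.ne'
  obtain ⟨C, hC1, hC2, hC3, hC4, hC5, hC6⟩ := cone_exists P h1P hmul hinv F hsep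
    ⟨v x₁, 0, hv x₁⟩ (v x₁ + v x₂) (fun o => by
      obtain ⟨ε, hε, H⟩ := bound hBP.conv hAnosov φ v hv hφv hξ heq x₁ x₂ hx (F o) (hF o)
      exact ⟨ε, hε, fun g ⟨γ, hg, hgp⟩ => H g γ hg hgp⟩)
  refine ⟨C, hC1, hC2, hC3, hC4, hC5, fun γ g hg => ?_⟩
  rcases hsign γ g hg with h | h
  · left
    exact hC6 g h
  · right
    have h1 := hC6 _ h
    rw [← Set.image_neg_eq_neg]
    conv_rhs => rw [← h1]
    rw [Set.image_image]
    refine Set.image_congr' fun u => ?_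
    rw [L_neg, _root_.neg_apply, neg_neg, RelAnosovAux.L_apply]
end
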